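/- arXiv:1109.1200 — 2 statements merged into one kernel-verified Lean document; each statement's English description precedes it below -/
import Mathlib

section
/- Let H be an infinite-dimensional separable complex Hilbert space. If W is a symmetric, countably syndetic subset of U(H), then the set W^506 of products of 506 elements of W contains an open neighborhood of the identity in the strong operator topology. -/
open Pointwise Topology

/-- The strong operator topology on the group of invertible linear isometries of `H`:
the topology of pointwise convergence on `H`. -/
noncomputable def strongOperatorTopology (𝕜 H : Type*) [RCLike 𝕜] [NormedAddCommGroup H]
    [InnerProductSpace 𝕜 H] : TopologicalSpace (H ≃ₗᵢ[𝕜] H) :=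
  TopologicalSpace.induced (fun u => (u : H → H)) Pi.topologicalSpace

namespace UnitarySteinhaus

open scoped InnerProductSpace
open Submodule

variable {H : Type*} [NormedAddCommGroup H] [InnerProductSpace ℂ H]
variable {ι κ : Type*}

section HilbertBasis

/-- The subgroup of unitary operators that fix every `v i` with `i ∈ S`. -/
def fixator (v : ι → H) (S : Set ι) : Subgroup (H ≃ₗᵢ[ℂ] H) where
  carrier := {g | ∀ i ∈ S, g (v i) = v i}
  mul_mem' {g h} hg hh i hi := by
    rw [LinearIsometryEquiv.coe_mul, Function.comp_apply, hh i hi, hg i hi]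
  one_mem' _ _ := rfl
  inv_mem' {g} hg i hi := by
    rw [LinearIsometryEquiv.coe_inv, LinearIsometryEquiv.symm_apply_eq, hg i hi]

theorem mul_apply (g h : H ≃ₗᵢ[ℂ] H) (x : H) : (g * h) x = g (h x) := rfl

theorem inv_apply_self (g : H ≃ₗᵢ[ℂ] H) (x : H) : g⁻¹ (g x) = x := g.symm_apply_apply x

theorem apply_inv_self (g : H ≃ₗᵢ[ℂ] H) (x : H) : g (g⁻¹ x) = x := g.apply_symm_apply x

theorem inner_inv_apply (g : H ≃ₗᵢ[ℂ] H) (x y : H) : ⟪g⁻¹ x, y⟫_ℂ = ⟪x, g y⟫_ℂ := by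
  rw [← g.inner_map_map, apply_inv_self]

theorem inner_apply_inv (g : H ≃ₗᵢ[ℂ] H) (x y : H) : ⟪x, g⁻¹ y⟫_ℂ = ⟪g x, y⟫_ℂ := by
  rw [← g.inner_map_map, apply_inv_self]

theorem orthonormal_map (g : H ≃ₗᵢ[ℂ] H) {v : ι → H} (hv : Orthonormal ℂ v) :
    Orthonormal ℂ (fun i => g (v i)) :=
  hv.comp_linearIsometryEquiv g

theorem eq_of_eq_on_hilbertBasis (b : HilbertBasis ι ℂ H) {g h : H ≃ₗᵢ[ℂ] H}
    (hgh : ∀ i, g (b i) = h (b i)) : g = h := by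
  ext x
  have h1 := (b.hasSum_repr x).mapL (g : H →L[ℂ] H)
  have h2 := (b.hasSum_repr x).mapL (h : H →L[ℂ] H)
  refine h1.unique (a₂ := h x) ?_
  convert h2 using 2 with i
  · simp [hgh]
  · rfl

/-- A unitary operator fixing the basis vectors indexed by `S` fixes every vector orthogonal to
the remaining basis vectors. -/
theorem apply_eq_self_of_mem_fixator (b : HilbertBasis ι ℂ H) {S : Set ι} {g : H ≃ₗᵢ[ℂ] H}
    (hg : g ∈ fixator b S) {y : H} (hy : ∀ i, i ∉ S → ⟪b i, y⟫_ℂ = 0) : g y = y := by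
  have h1 := (b.hasSum_repr y).mapL (g : H →L[ℂ] H)
  refine h1.unique ?_
  convert b.hasSum_repr y using 2 with i
  by_cases hi : i ∈ S
  · simp [hg i hi]
  · simp [b.repr_apply_apply, hy i hi]

theorem eq_zero_of_inner_hilbertBasis (b : HilbertBasis ι ℂ H) {x : H}
    (hx : ∀ i, ⟪b i, x⟫_ℂ = 0) : x = 0 := by
  have : b.repr x = 0 := by ext i; simp [b.repr_apply_apply, hx]
  simpa using this

theorem mem_orthogonal_span_range {v : ι → H} {x : H} :
    x ∈ (span ℂ (Set.range v))ᗮ ↔ ∀ i, ⟪v i, x⟫_ℂ = 0 := by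
  refine ⟨fun h i => h _ (subset_span ⟨i, rfl⟩), fun h y hy => ?_⟩
  induction hy using span_induction with
  | mem y hy => obtain ⟨i, rfl⟩ := hy; exact h i
  | zero => simp
  | add y z _ _ hy hz => rw [inner_add_left, hy, hz, add_zero]
  | smul c y _ hy => rw [inner_smul_left, hy, mul_zero]

theorem exists_hilbertBasis_of_orthonormal [CompleteSpace H] {v : ι → H} (hv : Orthonormal ℂ v)
    (htot : ∀ x, (∀ i, ⟪v i, x⟫_ℂ = 0) → x = 0) : ∃ b : HilbertBasis ι ℂ H, ∀ i, b i = v i := by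
  have h : (span ℂ (Set.range v))ᗮ = ⊥ := by
    rw [eq_bot_iff]
    exact fun x hx => htot x (mem_orthogonal_span_range.mp hx)
  exact ⟨HilbertBasis.mkOfOrthogonalEqBot hv h, fun i => by
    rw [HilbertBasis.coe_mkOfOrthogonalEqBot]⟩

theorem exists_hilbertBasis_comp [CompleteSpace H] (b : HilbertBasis ι ℂ H) (e : κ ≃ ι) :
    ∃ c : HilbertBasis κ ℂ H, ∀ k, c k = b (e k) :=
  exists_hilbertBasis_of_orthonormal (b.orthonormal.comp e e.injective) fun _ hx =>
    eq_zero_of_inner_hilbertBasis b fun i => by simpa using hx (e.symm i)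

theorem exists_unitary_of_hilbertBasis (b b' : HilbertBasis ι ℂ H) :
    ∃ g : H ≃ₗᵢ[ℂ] H, ∀ i, g (b i) = b' i := by
  classical
  refine ⟨b.repr.trans b'.repr.symm, fun i => ?_⟩
  simp [b.repr_self]

theorem exists_unitary_perm [CompleteSpace H] (b : HilbertBasis ι ℂ H) (σ : Equiv.Perm ι) :
    ∃ g : H ≃ₗᵢ[ℂ] H, ∀ i, g (b i) = b (σ i) := by
  obtain ⟨c, hc⟩ := exists_hilbertBasis_comp b σ
  obtain ⟨g, hg⟩ := exists_unitary_of_hilbertBasis b c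
  exact ⟨g, fun i => by rw [hg, hc]⟩

theorem countable_of_orthonormal [TopologicalSpace.SeparableSpace H] {v : ι → H}
    (hv : Orthonormal ℂ v) : Countable ι := by
  have hd : Set.PairwiseDisjoint (Set.univ : Set ι) (fun i => Metric.ball (v i) (1 / 2)) := by
    intro i _ j _ hij
    apply Metric.ball_disjoint_ball
    have : ‖v i - v j‖ ^ 2 = 2 := by
      rw [@norm_sub_sq ℂ, hv.1, hv.1, hv.2 hij]; norm_num
    rw [dist_eq_norm]
    nlinarith [norm_nonneg (v i - v j)]
  have := hd.countable_of_isOpen (fun _ _ => Metric.isOpen_ball)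
    (fun i _ => ⟨v i, Metric.mem_ball_self (by norm_num)⟩)
  exact Set.countable_univ_iff.mp this

theorem exists_hilbertBasis_nat [CompleteSpace H] [TopologicalSpace.SeparableSpace H]
    (hinf : ¬ FiniteDimensional ℂ H) : Nonempty (HilbertBasis ℕ ℂ H) := by
  obtain ⟨w, b, hb⟩ := exists_hilbertBasis ℂ H
  have hc : Countable w := countable_of_orthonormal b.orthonormal
  have hi : Infinite w := by
    by_contra hfin
    rw [not_infinite_iff_finite] at hfin
    have := Fintype.ofFinite w
    exact hinf b.toOrthonormalBasis.toBasis.finiteDimensional_of_finite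
  obtain ⟨e⟩ := nonempty_equiv_of_countable (α := ℕ) (β := w)
  exact ⟨(exists_hilbertBasis_comp b e).choose⟩

theorem exists_unitary_of_orthonormal [CompleteSpace H] [TopologicalSpace.SeparableSpace H]
    {v w : κ → H} (hv : Orthonormal ℂ v) (hw : Orthonormal ℂ w)
    (hv' : ¬ FiniteDimensional ℂ (span ℂ (Set.range v))ᗮ)
    (hw' : ¬ FiniteDimensional ℂ (span ℂ (Set.range w))ᗮ) :
    ∃ g : H ≃ₗᵢ[ℂ] H, ∀ k, g (v k) = w k := by
  have key : ∀ {v : κ → H}, Orthonormal ℂ v →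
      ¬ FiniteDimensional ℂ (span ℂ (Set.range v))ᗮ →
      ∃ b : HilbertBasis (κ ⊕ ℕ) ℂ H, ∀ k, b (Sum.inl k) = v k := by
    intro v hv hv'
    obtain ⟨c⟩ := exists_hilbertBasis_nat hv'
    have hvc : ∀ k n, ⟪v k, (c n : H)⟫_ℂ = 0 := fun k n =>
      mem_orthogonal_span_range.mp (c n).2 k
    have ho : Orthonormal ℂ (Sum.elim v (fun n => (c n : H))) := by
      refine ⟨?_, ?_⟩
      · rintro (k | n)
        · exact hv.1 k
        · exact c.orthonormal.1 n
      · rintro (k | n) (l | m) hne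
        · exact hv.2 (fun h => hne (by rw [h]))
        · exact hvc k m
        · exact inner_eq_zero_symm.mp (hvc l n)
        · exact c.orthonormal.2 (fun h => hne (by rw [h]))
    obtain ⟨b, hb⟩ := exists_hilbertBasis_of_orthonormal ho (fun x hx => by
      have hx' : x ∈ (span ℂ (Set.range v))ᗮ :=
        mem_orthogonal_span_range.mpr fun k => hx (Sum.inl k)
      have := eq_zero_of_inner_hilbertBasis c (x := ⟨x, hx'⟩) fun n => hx (Sum.inr n)
      exact congrArg Subtype.val this)
    exact ⟨b, fun k => hb (Sum.inl k)⟩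
  obtain ⟨b, hb⟩ := key hv hv'
  obtain ⟨c, hc⟩ := key hw hw'
  obtain ⟨g, hg⟩ := exists_unitary_of_hilbertBasis b c
  exact ⟨g, fun k => by rw [← hb, ← hc, hg]⟩

theorem not_finiteDimensional_of_orthonormal [Infinite κ] {v : κ → H} (hv : Orthonormal ℂ v)
    {S : Submodule ℂ H} (hS : ∀ n, v n ∈ S) : ¬ FiniteDimensional ℂ S := by
  intro h
  have hli : LinearIndependent ℂ (fun n => (⟨v n, hS n⟩ : S)) :=
    LinearIndependent.of_comp S.subtype hv.linearIndependent
  have := hli.finite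
  exact not_finite κ

theorem not_finiteDimensional_orthogonal (hinf : ¬ FiniteDimensional ℂ H)
    (S : Submodule ℂ H) [FiniteDimensional ℂ S] : ¬ FiniteDimensional ℂ Sᗮ := by
  intro h
  apply hinf
  have : FiniteDimensional ℂ (⊤ : Submodule ℂ H) := by
    rw [← Submodule.sup_orthogonal_of_hasOrthogonalProjection (K := S)]
    infer_instance
  exact Module.finite_def.mpr (Module.Finite.iff_fg.mp this)

end HilbertBasis

section Orthonormal

theorem exists_unit_mem_forall_inner_eq_zero {T : Submodule ℂ H} (hT : ¬ FiniteDimensional ℂ T)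
    (s : Finset H) : ∃ y ∈ T, ‖y‖ = 1 ∧ ∀ x ∈ s, ⟪x, y⟫_ℂ = 0 := by
  let f : T →ₗ[ℂ] (s → ℂ) := LinearMap.pi fun x => (innerₛₗ ℂ (x : H)).comp T.subtype
  have hf : ¬ Function.Injective f := fun h => hT (Module.Finite.of_injective f h)
  rw [← LinearMap.ker_eq_bot, LinearMap.ker_eq_bot'] at hf
  push Not at hf
  obtain ⟨y, hy, hy0⟩ := hf
  have hy0' : (y : H) ≠ 0 := fun h => hy0 (Subtype.ext h)
  refine ⟨((‖(y : H)‖⁻¹ : ℝ) : ℂ) • (y : H), T.smul_mem _ y.2, ?_, fun x hx => ?_⟩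
  · rw [norm_smul]
    simp [hy0']
  · have : ⟪x, (y : H)⟫_ℂ = 0 := congrFun hy ⟨x, hx⟩
    rw [inner_smul_right, this, mul_zero]

theorem exists_orthonormal_pair {T : Submodule ℂ H} (hT : ¬ FiniteDimensional ℂ T)
    (u : H ≃ₗᵢ[ℂ] H) : ∃ z t : ℕ → H, Orthonormal ℂ z ∧ Orthonormal ℂ t ∧
      (∀ n, z n ∈ T) ∧ (∀ n, t n ∈ T) ∧ ∀ n m, ⟪u (z n), t m⟫_ℂ = 0 := by
  classical
  obtain ⟨f, hf, hr⟩ := exists_seq_of_forall_finset_exists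
    (fun p : H × H => p.1 ∈ T ∧ p.2 ∈ T ∧ ‖p.1‖ = 1 ∧ ‖p.2‖ = 1 ∧ ⟪u p.1, p.2⟫_ℂ = 0)
    (fun p q : H × H => ⟪p.1, q.1⟫_ℂ = 0 ∧ ⟪p.2, q.2⟫_ℂ = 0 ∧ ⟪u p.1, q.2⟫_ℂ = 0 ∧
      ⟪u q.1, p.2⟫_ℂ = 0) (by
    intro s _
    obtain ⟨z, hzT, hz1, hz⟩ := exists_unit_mem_forall_inner_eq_zero hT
      (s.image Prod.fst ∪ s.image (fun p => u⁻¹ p.2))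
    obtain ⟨t, htT, ht1, ht⟩ := exists_unit_mem_forall_inner_eq_zero hT
      (s.image Prod.snd ∪ s.image (fun p => u p.1) ∪ {u z})
    refine ⟨(z, t), ⟨hzT, htT, hz1, ht1, ht _ (by simp)⟩, fun p hp => ⟨?_, ?_, ?_, ?_⟩⟩
    · exact hz _ (Finset.mem_union_left _ (Finset.mem_image_of_mem _ hp))
    · exact ht _ (Finset.mem_union_left _ (Finset.mem_union_left _
        (Finset.mem_image_of_mem _ hp)))
    · exact ht _ (Finset.mem_union_left _ (Finset.mem_union_right _
        (Finset.mem_image_of_mem (fun p : H × H => u p.1) hp)))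
    · have := hz _ (Finset.mem_union_right _
        (Finset.mem_image_of_mem (fun p : H × H => u⁻¹ p.2) hp))
      rw [inner_inv_apply] at this
      exact inner_eq_zero_symm.mp this)
  refine ⟨fun n => (f n).1, fun n => (f n).2, ⟨fun n => (hf n).2.2.1, ?_⟩,
    ⟨fun n => (hf n).2.2.2.1, ?_⟩, fun n => (hf n).1, fun n => (hf n).2.1, ?_⟩
  · intro n m hnm
    rcases lt_or_gt_of_ne hnm with h | h
    · exact (hr n m h).1
    · exact inner_eq_zero_symm.mp (hr m n h).1
  · intro n m hnm
    rcases lt_or_gt_of_ne hnm with h | h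
    · exact (hr n m h).2.1
    · exact inner_eq_zero_symm.mp (hr m n h).2.1
  · intro n m
    rcases lt_trichotomy n m with h | h | h
    · exact (hr n m h).2.2.1
    · subst h; exact (hf n).2.2.2.2
    · exact (hr m n h).2.2.2

open Classical in
theorem orthonormal_ite {e v : ι → H} (he : Orthonormal ℂ e) (hv : Orthonormal ℂ v) {S : Set ι}
    (h : ∀ i ∈ S, ∀ j, ⟪e i, v j⟫_ℂ = 0) : Orthonormal ℂ (fun i => if i ∈ S then e i else v i) := by
  refine ⟨fun i => ?_, fun i j hij => ?_⟩
  · dsimp only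
    split_ifs
    exacts [he.1 i, hv.1 i]
  · dsimp only
    split_ifs with hi hj hj
    · exact he.2 hij
    · exact h i hi j
    · exact inner_eq_zero_symm.mp (h j hj i)
    · exact hv.2 hij

section Separable

variable [CompleteSpace H] [TopologicalSpace.SeparableSpace H]

theorem exists_unitary_extend {e v : ι → H} (he : Orthonormal ℂ e) (hv : Orthonormal ℂ v)
    {S : Set ι} (hS : Sᶜ.Infinite) : ∃ g : H ≃ₗᵢ[ℂ] H, ∀ i ∈ S, g (e i) = v i := by
  have key : ∀ {v : ι → H}, Orthonormal ℂ v →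
      ¬ FiniteDimensional ℂ (span ℂ (Set.range fun i : S => v i))ᗮ := by
    intro v hv
    have := hS.to_subtype
    refine not_finiteDimensional_of_orthonormal (κ := (Sᶜ : Set ι)) (v := fun i => v i)
      (hv.comp _ Subtype.val_injective) fun i => mem_orthogonal_span_range.mpr fun j => hv.2 ?_
    rintro h
    exact i.2 (h ▸ j.2)
  obtain ⟨g, hg⟩ := exists_unitary_of_orthonormal (he.comp _ Subtype.val_injective)
    (hv.comp _ Subtype.val_injective) (key he) (key hv)
  exact ⟨g, fun i hi => hg ⟨i, hi⟩⟩

theorem exists_mem_fixator_of_orthonormal {e v : ι → H} (he : Orthonormal ℂ e)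
    (hv : Orthonormal ℂ v) {S R : Set ι} (hSR : (S ∪ R)ᶜ.Infinite)
    (h : ∀ i ∈ S, ∀ j, ⟪e i, v j⟫_ℂ = 0) :
    ∃ g ∈ fixator e S, ∀ i ∈ R \ S, g (e i) = v i := by
  classical
  obtain ⟨g, hg⟩ := exists_unitary_extend he (orthonormal_ite he hv h) hSR
  refine ⟨g, fun i hi => ?_, fun i hi => ?_⟩
  · rw [hg i (Or.inl hi), if_pos hi]
  · rw [hg i (Or.inr hi.1), if_neg hi.2]

/-- If infinitely many basis vectors lie outside `J₁ ∪ J₂`, every unitary operator fixing the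
common part `J₁ ∩ J₂` is a product of four operators fixing alternately `J₁` and `J₂`. -/
theorem exists_factorization_of_mem_fixator_inter [Countable ι] {e : ι → H}
    (he : Orthonormal ℂ e) {J₁ J₂ : Set ι} (hJ : (J₁ ∪ J₂)ᶜ.Infinite) {u : H ≃ₗᵢ[ℂ] H}
    (hu : u ∈ fixator e (J₁ ∩ J₂)) :
    ∃ a ∈ fixator e J₁, ∃ d ∈ fixator e J₂, ∃ c ∈ fixator e J₁, ∃ d' ∈ fixator e J₂,
      u = a * d * c * d' := by
  obtain ⟨enc, henc⟩ := exists_injective_nat ι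
  let T : Submodule ℂ H := (span ℂ (Set.range fun i : (J₁ ∪ J₂ : Set ι) => e i))ᗮ
  have hT : ¬ FiniteDimensional ℂ T := by
    have := hJ.to_subtype
    refine not_finiteDimensional_of_orthonormal (κ := ((J₁ ∪ J₂)ᶜ : Set ι)) (v := fun i => e i)
      (he.comp _ Subtype.val_injective) fun i => mem_orthogonal_span_range.mpr fun j => he.2 ?_
    rintro h
    exact i.2 (h ▸ j.2)
  have hTe : ∀ {x}, x ∈ T → ∀ i ∈ J₁ ∪ J₂, ⟪e i, x⟫_ℂ = 0 := fun hx i hi =>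
    mem_orthogonal_span_range.mp hx ⟨i, hi⟩
  obtain ⟨z, t, hz, ht, hzT, htT, hzt⟩ := exists_orthonormal_pair hT u
  have hJ' : (J₂ ∪ J₁)ᶜ.Infinite := by rwa [Set.union_comm]
  obtain ⟨a, ha, hat⟩ := exists_mem_fixator_of_orthonormal he (ht.comp enc henc) hJ
    fun i hi j => hTe (htT _) i (Or.inl hi)
  have horth : ∀ i ∈ J₂, ∀ n, ⟪e i, a⁻¹ (u (z n))⟫_ℂ = 0 := by
    intro i hi n
    rw [inner_apply_inv]
    by_cases hi1 : i ∈ J₁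
    · rw [ha i hi1, ← hu i ⟨hi1, hi⟩, u.inner_map_map]
      exact hTe (hzT n) i (Or.inl hi1)
    · rw [hat i ⟨hi, hi1⟩]
      exact inner_eq_zero_symm.mp (hzt _ _)
  obtain ⟨d, hd, hdz⟩ := exists_mem_fixator_of_orthonormal he
    (orthonormal_map a⁻¹ (orthonormal_map u (hz.comp enc henc))) hJ' fun i hi j => horth i hi _
  obtain ⟨r, hr, hrz⟩ := exists_mem_fixator_of_orthonormal he (hz.comp enc henc) hJ'
    fun i hi j => hTe (hzT _) i (Or.inr hi)
  refine ⟨a, ha, d, hd, d⁻¹ * a⁻¹ * u * r, fun i hi => ?_, r⁻¹, inv_mem hr, by group⟩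
  simp only [mul_apply]
  by_cases hi2 : i ∈ J₂
  · rw [hr i hi2, hu i ⟨hi, hi2⟩, (inv_mem ha : a⁻¹ ∈ fixator e J₁) i hi,
      (inv_mem hd : d⁻¹ ∈ fixator e J₂) i hi2]
  · rw [hrz i ⟨hi, hi2⟩]
    have := hdz i ⟨hi, hi2⟩
    simp only [Function.comp_apply] at this ⊢
    rw [← this, inv_apply_self]

end Separable

section Finite

variable [CompleteSpace H] [TopologicalSpace.SeparableSpace H]

theorem exists_unitary_of_inner_eq [Finite κ] (hinf : ¬ FiniteDimensional ℂ H) {v w : κ → H}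
    (h : ∀ i j, ⟪v i, v j⟫_ℂ = ⟪w i, w j⟫_ℂ) : ∃ g : H ≃ₗᵢ[ℂ] H, ∀ k, g (v k) = w k := by
  classical
  have := Fintype.ofFinite κ
  let A : (κ → ℂ) →ₗ[ℂ] H := Fintype.linearCombination ℂ v
  let B : (κ → ℂ) →ₗ[ℂ] H := Fintype.linearCombination ℂ w
  have hAB : ∀ c, ‖B c‖ = ‖A c‖ := by
    intro c
    have : ⟪B c, B c⟫_ℂ = ⟪A c, A c⟫_ℂ := by
      simp only [A, B, Fintype.linearCombination_apply, sum_inner, inner_sum, inner_smul_left,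
        inner_smul_right, h]
    rw [@norm_eq_sqrt_re_inner ℂ, this, ← @norm_eq_sqrt_re_inner ℂ]
  obtain ⟨σ, hσ⟩ := A.rangeRestrict.exists_rightInverse_of_surjective A.range_rangeRestrict
  have hσ' : ∀ x : A.range, A (σ x) = x := fun x => congrArg Subtype.val (LinearMap.congr_fun hσ x)
  let L : A.range →ₗᵢ[ℂ] H := ⟨B ∘ₗ σ, fun x => by
    rw [LinearMap.comp_apply, hAB, hσ']; rfl⟩
  have hL : ∀ c, L ⟨A c, c, rfl⟩ = B c := by
    intro c
    rw [← sub_eq_zero, ← norm_eq_zero]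
    change ‖B (σ _) - B c‖ = 0
    rw [← map_sub, hAB, map_sub, hσ', sub_self, norm_zero]
  let o := stdOrthonormalBasis ℂ A.range
  have ho1 : Orthonormal ℂ (fun i => (o i : H)) :=
    o.orthonormal.comp_linearIsometry A.range.subtypeₗᵢ
  have ho2 : Orthonormal ℂ (fun i => L (o i)) := o.orthonormal.comp_linearIsometry L
  have hfd : ∀ v : Fin (Module.finrank ℂ A.range) → H,
      ¬ FiniteDimensional ℂ (span ℂ (Set.range v))ᗮ := fun v => by
    have : FiniteDimensional ℂ (span ℂ (Set.range v)) :=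
      FiniteDimensional.span_of_finite ℂ (Set.finite_range v)
    exact not_finiteDimensional_orthogonal hinf _
  obtain ⟨g, hg⟩ := exists_unitary_of_orthonormal ho1 ho2 (hfd _) (hfd _)
  have hgL : (g.toLinearEquiv.toLinearMap ∘ₗ A.range.subtype) = L.toLinearMap :=
    o.toBasis.ext fun i => by simpa using hg i
  refine ⟨g, fun k => ?_⟩
  have h1 : A (Pi.single k 1) = v k := by simp [A, Fintype.linearCombination_apply_single]
  have h2 : B (Pi.single k 1) = w k := by simp [B, Fintype.linearCombination_apply_single]
  have h3 := LinearMap.congr_fun hgL ⟨A (Pi.single k 1), Pi.single k 1, rfl⟩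
  rw [← h1, ← h2, ← hL]
  exact h3

/-- Two orthonormal families with the same inner products against a third family `p` are
conjugate by a unitary operator fixing `p`. -/
theorem exists_unitary_fixing [Finite κ] (hinf : ¬ FiniteDimensional ℂ H) {p v w : κ → H}
    (hv : Orthonormal ℂ v) (hw : Orthonormal ℂ w) (h : ∀ i j, ⟪p i, v j⟫_ℂ = ⟪p i, w j⟫_ℂ) :
    ∃ g : H ≃ₗᵢ[ℂ] H, g ∈ fixator p Set.univ ∧ ∀ i, g (v i) = w i := by
  classical
  obtain ⟨g, hg⟩ := exists_unitary_of_inner_eq hinf (v := Sum.elim p v) (w := Sum.elim p w) (by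
    rintro (i | i) (j | j)
    · rfl
    · exact h i j
    · change ⟪v i, p j⟫_ℂ = ⟪w i, p j⟫_ℂ
      rw [← inner_conj_symm, h, inner_conj_symm]
    · simp [orthonormal_iff_ite.mp hv, orthonormal_iff_ite.mp hw])
  exact ⟨g, fun i _ => hg (Sum.inl i), fun i => hg (Sum.inr i)⟩

theorem exists_orthonormal_mem_orthogonal [Finite κ] (hinf : ¬ FiniteDimensional ℂ H)
    (S : Submodule ℂ H) [FiniteDimensional ℂ S] :
    ∃ g : κ → H, Orthonormal ℂ g ∧ ∀ k, g k ∈ Sᗮ := by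
  obtain ⟨c⟩ := exists_hilbertBasis_nat (not_finiteDimensional_orthogonal hinf S)
  obtain ⟨enc, henc⟩ := exists_injective_nat κ
  exact ⟨fun k => (c (enc k) : H), (c.orthonormal.comp enc henc).comp_linearIsometry Sᗮ.subtypeₗᵢ,
    fun k => (c (enc k)).2⟩

open scoped ComplexOrder in
/-- Inside an infinite-dimensional space, two matrices `M` and `T` stacked into a contraction are
the coefficients of some orthonormal family along given orthonormal families `e` and `f`. -/
theorem exists_orthonormal_with_coefficients [Fintype κ] [DecidableEq κ]
    (hinf : ¬ FiniteDimensional ℂ H) {e f : κ → H} (he : Orthonormal ℂ e) (hf : Orthonormal ℂ f)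
    (hef : ∀ i j, ⟪e i, f j⟫_ℂ = 0) {M T : Matrix κ κ ℂ}
    (hMT : (1 - M.conjTranspose * M - T.conjTranspose * T).PosSemidef) :
    ∃ v : κ → H, Orthonormal ℂ v ∧ (∀ j i, ⟪e j, v i⟫_ℂ = M j i) ∧
      ∀ j i, ⟪f j, v i⟫_ℂ = T j i := by
  classical
  obtain ⟨B, hB⟩ : ∃ B : Matrix κ κ ℂ,
      1 - M.conjTranspose * M - T.conjTranspose * T = B.conjTranspose * B := by
    open scoped MatrixOrder in exact CStarAlgebra.nonneg_iff_eq_star_mul_self.mp hMT.nonneg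
  have : FiniteDimensional ℂ (span ℂ (Set.range (Sum.elim e f))) :=
    FiniteDimensional.span_of_finite ℂ (Set.finite_range _)
  obtain ⟨g, hg, hgS⟩ := exists_orthonormal_mem_orthogonal (κ := κ) hinf
    (span ℂ (Set.range (Sum.elim e f)))
  have heg : ∀ i j, ⟪e i, g j⟫_ℂ = 0 := fun i j =>
    mem_orthogonal_span_range.mp (hgS j) (Sum.inl i)
  have hfg : ∀ i j, ⟪f i, g j⟫_ℂ = 0 := fun i j =>
    mem_orthogonal_span_range.mp (hgS j) (Sum.inr i)
  have hfe : ∀ i j, ⟪f i, e j⟫_ℂ = 0 := fun i j => inner_eq_zero_symm.mp (hef j i)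
  have hge : ∀ i j, ⟪g i, e j⟫_ℂ = 0 := fun i j => inner_eq_zero_symm.mp (heg j i)
  have hgf : ∀ i j, ⟪g i, f j⟫_ℂ = 0 := fun i j => inner_eq_zero_symm.mp (hfg j i)
  have cross : ∀ {p q : κ → H}, (∀ i j, ⟪p i, q j⟫_ℂ = 0) → ∀ c d : κ → ℂ,
      ⟪∑ j, c j • p j, ∑ j, d j • q j⟫_ℂ = 0 := by
    intro p q h c d
    simp [h]
  have cross' : ∀ {p q : κ → H}, (∀ i j, ⟪p i, q j⟫_ℂ = 0) → ∀ i (d : κ → ℂ),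
      ⟪p i, ∑ j, d j • q j⟫_ℂ = 0 := by
    intro p q h i d
    simp [h]
  refine ⟨fun i => ∑ j, M j i • e j + ∑ j, T j i • f j + ∑ j, B j i • g j, ?_, ?_, ?_⟩
  · rw [orthonormal_iff_ite]
    intro i l
    simp only [inner_add_left, inner_add_right, cross hef, cross heg, cross hfg, cross hfe,
      cross hge, cross hgf, he.inner_sum, hf.inner_sum, hg.inner_sum]
    have h := congrFun (congrFun hB i) l
    simp only [Matrix.sub_apply, Matrix.mul_apply, Matrix.conjTranspose_apply, Matrix.one_apply,
      RCLike.star_def] at h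
    linear_combination -h
  · intro j i
    simp only [inner_add_right, cross' hef, cross' heg, he.inner_right_fintype, add_zero]
  · intro j i
    simp only [inner_add_right, cross' hfe, cross' hfg, hf.inner_right_fintype, add_zero, zero_add]

end Finite

open scoped ComplexOrder in
theorem posSemidef_one_sub_of_orthonormal [Fintype κ] [DecidableEq κ] {e v : κ → H}
    (he : Orthonormal ℂ e) (hv : Orthonormal ℂ v) :
    (1 - (Matrix.of fun j i => ⟪e j, v i⟫_ℂ).conjTranspose *
      (Matrix.of fun j i => ⟪e j, v i⟫_ℂ)).PosSemidef := by
  suffices hgram : 1 - (Matrix.of fun j i => ⟪e j, v i⟫_ℂ).conjTranspose *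
      (Matrix.of fun j i => ⟪e j, v i⟫_ℂ) =
      Matrix.gram ℂ fun i => v i - ∑ j, ⟪e j, v i⟫_ℂ • e j by
    rw [hgram]
    exact Matrix.posSemidef_gram ℂ _
  ext i l
  have h : ∀ j, ⟪e j, v l - ∑ j, ⟪e j, v l⟫_ℂ • e j⟫_ℂ = 0 := fun j => by
    rw [inner_sub_right, he.inner_right_fintype, sub_self]
  rw [Matrix.gram_apply, inner_sub_left, sum_inner]
  simp only [inner_smul_left, h, mul_zero, Finset.sum_const_zero, sub_zero]
  rw [inner_sub_right, inner_sum, orthonormal_iff_ite.mp hv]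
  simp [Matrix.mul_apply, Matrix.one_apply, inner_smul_right, mul_comm]

open scoped ComplexOrder in
theorem posSemidef_smul_one_sub [Fintype κ] [DecidableEq κ] {N : Matrix κ κ ℂ} {ε : ℝ}
    (hN : ∑ i, ∑ j, ‖N i j‖ ^ 2 ≤ ε) :
    (((ε : ℂ) • (1 : Matrix κ κ ℂ)) - N.conjTranspose * N).PosSemidef := by
  refine .of_dotProduct_mulVec_nonneg ?_ fun x => ?_
  · refine .sub ?_ (Matrix.isHermitian_conjTranspose_mul_self N)
    simp [Matrix.IsHermitian, Matrix.conjTranspose_smul]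
  have hx : ∀ y : κ → ℂ, star y ⬝ᵥ y = ((∑ j, ‖y j‖ ^ 2 : ℝ) : ℂ) := by
    intro y
    simp [dotProduct, Complex.conj_mul']
  have h1 : star x ⬝ᵥ ((((ε : ℂ) • (1 : Matrix κ κ ℂ)) - N.conjTranspose * N).mulVec x) =
      ((ε * ∑ j, ‖x j‖ ^ 2 - ∑ i, ‖N.mulVec x i‖ ^ 2 : ℝ) : ℂ) := by
    rw [Matrix.sub_mulVec, dotProduct_sub, Matrix.smul_mulVec, Matrix.one_mulVec, dotProduct_smul,
      hx, ← Matrix.mulVec_mulVec, Matrix.dotProduct_mulVec, Matrix.vecMul_conjTranspose, star_star,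
      hx]
    simp
  rw [h1, Complex.zero_le_real, sub_nonneg]
  calc ∑ i, ‖N.mulVec x i‖ ^ 2 ≤ ∑ i, (∑ j, ‖N i j‖ ^ 2) * ∑ j, ‖x j‖ ^ 2 := by
        refine Finset.sum_le_sum fun i _ => ?_
        calc ‖N.mulVec x i‖ ^ 2 ≤ (∑ j, ‖N i j‖ * ‖x j‖) ^ 2 := by
              gcongr
              refine (norm_sum_le _ _).trans (Finset.sum_le_sum fun j _ => ?_)
              rw [norm_mul]
          _ ≤ _ := Finset.sum_mul_sq_le_sq_mul_sq _ _ _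
    _ ≤ ε * ∑ j, ‖x j‖ ^ 2 := by
        rw [← Finset.sum_mul]
        gcongr

end Orthonormal

section Blocks

section Group

variable {G : Type*} [Group G] {W : Set G}

theorem mul_mem_pow_add {a b : G} {m n : ℕ} (ha : a ∈ W ^ m) (hb : b ∈ W ^ n) :
    a * b ∈ W ^ (m + n) := by
  rw [pow_add]
  exact Set.mul_mem_mul ha hb

theorem inv_mem_pow (hsym : W⁻¹ = W) {a : G} {m : ℕ} (ha : a ∈ W ^ m) : a⁻¹ ∈ W ^ m := by
  rw [← hsym, inv_pow]
  exact Set.inv_mem_inv.mpr ha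

theorem pow_subset_pow_add_two_mul (hsym : W⁻¹ = W) (hne : W.Nonempty) (m k : ℕ) :
    W ^ m ⊆ W ^ (m + 2 * k) := by
  obtain ⟨w, hw⟩ := hne
  have h1 : (1 : G) ∈ W ^ 2 := by
    rw [pow_two, ← mul_inv_cancel w]
    exact Set.mul_mem_mul hw (hsym ▸ Set.inv_mem_inv.mpr hw)
  intro a ha
  rw [pow_add, pow_mul, ← mul_one a]
  exact Set.mul_mem_mul ha (Set.one_mem_pow h1)

theorem exists_inv_mul_mem_sq {α : Type*} [Uncountable α] (hsym : W⁻¹ = W) {s : ℕ → G}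
    (hs : ∀ g, ∃ n, g ∈ s n • W) (f : α → G) : ∃ x y, x ≠ y ∧ (f x)⁻¹ * f y ∈ W ^ 2 := by
  choose n hn using fun x => hs (f x)
  obtain ⟨x, y, hxy, hne⟩ := Function.not_injective_iff.mp (not_injective_uncountable_countable n)
  refine ⟨x, y, hne, ?_⟩
  obtain ⟨w, hw, hwx⟩ := hn x
  obtain ⟨w', hw', hwy⟩ := hn y
  rw [← hwx, ← hwy, ← hxy, pow_two]
  simp only [smul_eq_mul, mul_inv_rev, mul_assoc, inv_mul_cancel_left]
  exact Set.mul_mem_mul (hsym ▸ Set.inv_mem_inv.mpr hw) hw'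

end Group

variable [CompleteSpace H]

/-- Unitary operators supported on pairwise disjoint blocks of a Hilbert basis glue together. -/
theorem exists_unitary_glue {ν μ : Type*} (b : HilbertBasis (ν × μ) ℂ H) {g : ν → H ≃ₗᵢ[ℂ] H}
    (hg : ∀ n, g n ∈ fixator b {p | p.1 ≠ n}) :
    ∃ D : H ≃ₗᵢ[ℂ] H, ∀ n m, D (b (n, m)) = g n (b (n, m)) := by
  have hblock : ∀ n n' m j, n ≠ n' → ⟪b (n, j), g n' (b (n', m))⟫_ℂ = 0 := by
    intro n n' m j hne
    rw [← hg n' (n, j) hne, LinearIsometryEquiv.inner_map_map]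
    exact b.orthonormal.2 fun h => hne (congrArg Prod.fst h)
  have hfix : ∀ n y, (∀ m, ⟪b (n, m), y⟫_ℂ = 0) → g n y = y := by
    intro n y hy
    refine apply_eq_self_of_mem_fixator b (hg n) ?_
    rintro ⟨n', m⟩ h
    obtain rfl : n' = n := not_not.mp h
    exact hy m
  have ho : Orthonormal ℂ fun p : ν × μ => g p.1 (b p) := by
    refine ⟨fun p => by rw [LinearIsometryEquiv.norm_map, b.orthonormal.1], ?_⟩
    rintro ⟨n, m⟩ ⟨n', m'⟩ hne
    change ⟪g n (b (n, m)), g n' (b (n', m'))⟫_ℂ = 0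
    by_cases h : n = n'
    · subst h
      rw [LinearIsometryEquiv.inner_map_map]
      exact b.orthonormal.2 hne
    · rw [← hfix n _ fun j => hblock n n' m' j h, LinearIsometryEquiv.inner_map_map]
      exact hblock n n' m' m h
  obtain ⟨c, hc⟩ := exists_hilbertBasis_of_orthonormal ho fun x hx =>
    eq_zero_of_inner_hilbertBasis b fun ⟨n, m⟩ => by
      have hy : ∀ j, ⟪b (n, j), (g n)⁻¹ x⟫_ℂ = 0 := fun j => by
        rw [inner_apply_inv]
        exact hx (n, j)
      rw [← apply_inv_self (g n) x, hfix n _ hy]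
      exact hy m
  obtain ⟨D, hD⟩ := exists_unitary_of_hilbertBasis b c
  exact ⟨D, fun n m => by rw [hD, hc]⟩

/-- If countably many translates of `W` cover the unitary group, then `W ^ 2` realizes every
unitary operator on some block of a given partition of a Hilbert basis. -/
theorem exists_full_block {μ : Type*} {W : Set (H ≃ₗᵢ[ℂ] H)} (hsym : W⁻¹ = W)
    {s : ℕ → H ≃ₗᵢ[ℂ] H} (hs : ∀ g, ∃ n, g ∈ s n • W) (b : HilbertBasis (ℕ × μ) ℂ H) :
    ∃ n, ∀ D ∈ fixator b {p | p.1 ≠ n}, ∃ h ∈ W ^ 2, ∀ m, h (b (n, m)) = D (b (n, m)) := by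
  obtain ⟨n, hn⟩ : ∃ n, ∀ D ∈ fixator b {p | p.1 ≠ n},
      ∃ w ∈ W, ∀ m, s n (w (b (n, m))) = D (b (n, m)) := by
    by_contra! hcon
    choose D hD hDW using hcon
    obtain ⟨E, hE⟩ := exists_unitary_glue b hD
    obtain ⟨n, w, hw, rfl⟩ := hs E
    obtain ⟨m, hm⟩ := hDW n w hw
    exact hm (hE n m)
  refine ⟨n, fun D hD => ?_⟩
  obtain ⟨w, hw, hwD⟩ := hn D hD
  obtain ⟨w₁, hw₁, hw₁D⟩ := hn 1 (one_mem _)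
  refine ⟨w₁⁻¹ * w, ?_, fun m => ?_⟩
  · rw [pow_two]
    exact Set.mul_mem_mul (hsym ▸ Set.inv_mem_inv.mpr hw₁) hw
  have hfix : (s n * w₁) ∈ fixator b {p | p.1 = n} := by
    rintro ⟨_, j⟩ rfl
    exact hw₁D j
  have h := apply_eq_self_of_mem_fixator b hfix (y := D (b (n, m))) fun i hi => by
    rw [← hD i hi, LinearIsometryEquiv.inner_map_map]
    refine b.orthonormal.2 ?_
    rintro rfl
    exact hi rfl
  have h' : w (b (n, m)) = w₁ (D (b (n, m))) := (s n).injective ((hwD m).trans h.symm)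
  rw [mul_apply, h', inv_apply_self]

end Blocks

section Shift

theorem pow_apply_of_shift {β μ : Type*} {b : β × ℤ × μ → H} {v : H ≃ₗᵢ[ℂ] H}
    {t : β → ℤ} (hv : ∀ i k j, v (b (i, k, j)) = b (i, k + t i, j)) (N : ℕ) (i : β) (k : ℤ)
    (j : μ) : (v ^ N) (b (i, k, j)) = b (i, k + N * t i, j) := by
  induction N with
  | zero => simp
  | succ N ih =>
    rw [pow_succ', mul_apply, ih, hv]
    congr 3
    push_cast
    ring

theorem pow_inv_apply_of_shift {β μ : Type*} {b : β × ℤ × μ → H} {v : H ≃ₗᵢ[ℂ] H}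
    {t : β → ℤ} (hv : ∀ i k j, v (b (i, k, j)) = b (i, k + t i, j)) (N : ℕ) (i : β) (k : ℤ)
    (j : μ) : (v ^ N)⁻¹ (b (i, k, j)) = b (i, k - N * t i, j) := by
  rw [← inv_apply_self (v ^ N) (b (i, k - N * t i, j)), pow_apply_of_shift hv, sub_add_cancel]

variable [CompleteSpace H]

/-- If `v` shifts a sequence of blocks, an operator supported on one of these blocks is a
commutator with `v`. -/
theorem exists_commutator_shift {β μ : Type*} (b : HilbertBasis (β × ℤ × μ) ℂ H)
    {v : H ≃ₗᵢ[ℂ] H} {t : β → ℤ} (hv : ∀ i k j, v (b (i, k, j)) = b (i, k + t i, j))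
    {i₀ : β} (ht : t i₀ = 1) {u : H ≃ₗᵢ[ℂ] H}
    (hu : u ∈ fixator b {p | ¬(p.1 = i₀ ∧ p.2.1 = 0)}) :
    ∃ D : H ≃ₗᵢ[ℂ] H, D ∈ fixator b {p | p.1 ≠ i₀} ∧ u = D * v * D⁻¹ * v⁻¹ := by
  classical
  obtain ⟨c, hc⟩ := exists_hilbertBasis_comp b (Equiv.prodAssoc β ℤ μ)
  have hc' : ∀ i k j, c ((i, k), j) = b (i, k, j) := fun i k j => hc ((i, k), j)
  let g : β × ℤ → H ≃ₗᵢ[ℂ] H := fun q =>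
    if q.1 = i₀ ∧ 0 ≤ q.2 then v ^ q.2.toNat * u * (v ^ q.2.toNat)⁻¹ else 1
  have hg : ∀ q, g q ∈ fixator c {p | p.1 ≠ q} := by
    rintro ⟨i, k⟩ ⟨⟨i', k'⟩, j⟩ hne
    simp only [g]
    split_ifs with h
    · obtain ⟨rfl, hk⟩ := h
      rw [hc', mul_apply, mul_apply, pow_inv_apply_of_shift hv, hu (i', _, j),
        pow_apply_of_shift hv, sub_add_cancel]
      rintro ⟨rfl, h⟩
      simp only [ht, mul_one, Int.toNat_of_nonneg hk, sub_eq_zero] at h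
      exact hne (by rw [h])
    · rfl
  obtain ⟨D, hD⟩ := exists_unitary_glue c hg
  simp only [hc'] at hD
  replace hD : ∀ i k j, D (b (i, k, j)) = g (i, k) (b (i, k, j)) := fun i k j => hD (i, k) j
  have hD1 : ∀ i k j, ¬(i = i₀ ∧ 0 ≤ k) → D (b (i, k, j)) = b (i, k, j) := by
    intro i k j h
    rw [hD]
    simp only [g, if_neg h]
    rfl
  have hD2 : ∀ (N : ℕ) j, D (b (i₀, N, j)) = (v ^ N) (u (b (i₀, 0, j))) := by
    intro N j
    rw [hD]
    simp only [g, true_and, Int.natCast_nonneg, if_true, Int.toNat_natCast]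
    rw [mul_apply, mul_apply, pow_inv_apply_of_shift hv, ht, mul_one, sub_self]
  have key : D * v = u * v * D := by
    refine eq_of_eq_on_hilbertBasis b ?_
    rintro ⟨i, k, j⟩
    simp only [mul_apply]
    by_cases hi : i = i₀
    · subst hi
      rw [hv, ht]
      by_cases hk : 0 ≤ k
      · lift k to ℕ using hk
        rw [hD2, ← Nat.cast_succ, hD2, ← mul_apply v, ← pow_succ']
        refine (apply_eq_self_of_mem_fixator b hu ?_).symm
        rintro ⟨i', k', j'⟩ h
        obtain ⟨rfl, rfl⟩ := not_not.mp h
        rw [← inner_inv_apply, pow_inv_apply_of_shift hv, ← hu (i', _, j'),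
          LinearIsometryEquiv.inner_map_map]
        · refine b.orthonormal.2 fun h => ?_
          have := congrArg (fun p => p.2.1) h
          simp only [ht] at this
          omega
        · rintro ⟨-, h⟩
          simp only [ht] at h
          omega
      · rw [hD1 _ _ _ (fun h => hk h.2), hv, ht]
        rcases eq_or_ne (k + 1) 0 with h | h
        · rw [h]
          exact hD2 0 j
        · rw [hD1 _ _ _ (fun h' => by omega), hu (i, k + 1, j) (fun h' => h h'.2)]
    · rw [hv, hD1 _ _ _ (fun h => hi h.1), hD1 _ _ _ (fun h => hi h.1), hv,
        hu (i, _, j) (fun h => hi h.1)]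
  refine ⟨D, ?_, by rw [key]; group⟩
  rintro ⟨i, k, j⟩ hi
  exact hD1 i k j fun h => hi h.1

end Shift

section Fixators

theorem uncountable_set_nat : Uncountable (Set ℕ) := by
  refine ⟨fun h => ?_⟩
  obtain ⟨f, hf⟩ := exists_surjective_nat (Set ℕ)
  exact Function.cantor_surjective f hf

/-- Two unitary operators agreeing on a block have, up to an operator commuting with `v`, the
same commutators with an operator `v` supported on the block. -/
theorem commutator_eq_of_eq_on (b : HilbertBasis ι ℂ H) {S : Set ι} {v D h : H ≃ₗᵢ[ℂ] H}
    (hv : v ∈ fixator b Sᶜ) (hD : ∀ i ∈ S, h (b i) = D (b i)) :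
    D * v * D⁻¹ * v⁻¹ = h * v * h⁻¹ * v⁻¹ := by
  have hz : D⁻¹ * h ∈ fixator b S := fun i hi => by rw [mul_apply, hD i hi, inv_apply_self]
  have key : D⁻¹ * h * v = v * (D⁻¹ * h) := by
    refine eq_of_eq_on_hilbertBasis b fun i => ?_
    rw [mul_apply, mul_apply v]
    by_cases hi : i ∈ S
    · rw [hz i hi]
      refine apply_eq_self_of_mem_fixator b hz fun j hj => ?_
      rw [← hv j hj, LinearIsometryEquiv.inner_map_map]
      exact b.orthonormal.2 fun h => hj (h ▸ hi)
    · rw [hv i hi]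
      refine (apply_eq_self_of_mem_fixator b hv fun j hj => ?_).symm
      rw [← hz j (not_not.mp hj), LinearIsometryEquiv.inner_map_map]
      exact b.orthonormal.2 fun h => hj (h ▸ hi)
  calc D * v * D⁻¹ * v⁻¹ = D * (v * (D⁻¹ * h)) * h⁻¹ * v⁻¹ := by group
    _ = h * v * h⁻¹ * v⁻¹ := by rw [← key]; group

variable [CompleteSpace H]

/-- If `W` is symmetric and countably many translates of it cover the unitary group, then `W ^ 2`
contains an operator acting as a shift on a block indexed by `{n} × {i₀} × ℤ × μ`. -/
theorem exists_shift_mem_sq {μ : Type*} {W : Set (H ≃ₗᵢ[ℂ] H)} (hsym : W⁻¹ = W)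
    {s : ℕ → H ≃ₗᵢ[ℂ] H} (hs : ∀ g, ∃ n, g ∈ s n • W)
    (b : HilbertBasis ((ℕ × ℕ) × ℤ × μ) ℂ H) (n : ℕ) :
    ∃ v ∈ W ^ 2, ∃ t : ℕ × ℕ → ℤ, (∃ i₀, t (n, i₀) = 1) ∧ (∀ q, q.1 ≠ n → t q = 0) ∧
      ∀ i k j, v (b (i, k, j)) = b (i, k + t i, j) := by
  classical
  let t : Set ℕ → ℕ × ℕ → ℤ := fun x q => if q.1 = n ∧ q.2 ∈ x then 1 else 0
  have hu : ∀ x, ∃ u : H ≃ₗᵢ[ℂ] H, ∀ i k j, u (b (i, k, j)) = b (i, k + t x i, j) := by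
    intro x
    obtain ⟨u, hu⟩ := exists_unitary_perm b
      ⟨fun p => (p.1, p.2.1 + t x p.1, p.2.2), fun p => (p.1, p.2.1 - t x p.1, p.2.2),
        fun p => by simp, fun p => by simp⟩
    exact ⟨u, fun i k j => hu (i, k, j)⟩
  choose u hu using hu
  have hu' : ∀ x i k j, (u x)⁻¹ (b (i, k, j)) = b (i, k - t x i, j) := by
    intro x i k j
    rw [← inv_apply_self (u x) (b (i, k - t x i, j)), hu, sub_add_cancel]
  have huv : ∀ x y i k j, ((u x)⁻¹ * u y) (b (i, k, j)) = b (i, k + (t y i - t x i), j) := by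
    intro x y i k j
    rw [mul_apply, hu, hu', add_sub_assoc]
  have := uncountable_set_nat
  obtain ⟨x, y, hxy, hW⟩ := exists_inv_mul_mem_sq hsym hs u
  have ht0 : ∀ x q, q.1 ≠ n → t x q = 0 := fun x q hq => if_neg fun h => hq h.1
  obtain ⟨i₀, hi₀⟩ : ∃ i₀, ¬(i₀ ∈ x ↔ i₀ ∈ y) := by
    by_contra! h
    exact hxy (Set.ext h)
  by_cases hx : i₀ ∈ x
  · have hy : i₀ ∉ y := fun hy => hi₀ (iff_of_true hx hy)
    refine ⟨(u y)⁻¹ * u x, ?_, fun i => t x i - t y i, ⟨i₀, by simp [t, hx, hy]⟩,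
      fun q hq => by simp [ht0 _ q hq], huv y x⟩
    simpa using inv_mem_pow hsym hW
  · have hy : i₀ ∈ y := by
      by_contra hy
      exact hi₀ (iff_of_false hx hy)
    exact ⟨_, hW, fun i => t y i - t x i, ⟨i₀, by simp [t, hx, hy]⟩,
      fun q hq => by simp [ht0 _ q hq], huv x y⟩

theorem exists_fixator_subset_pow_eight [Countable ι] [Infinite ι] {W : Set (H ≃ₗᵢ[ℂ] H)}
    (hsym : W⁻¹ = W) {s : ℕ → H ≃ₗᵢ[ℂ] H} (hs : ∀ g, ∃ n, g ∈ s n • W)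
    (b : HilbertBasis ι ℂ H) :
    ∃ J : Set ι, J.Infinite ∧ Jᶜ.Infinite ∧ ∀ u ∈ fixator b J, u ∈ W ^ 8 := by
  obtain ⟨e⟩ := nonempty_equiv_of_countable (α := (ℕ × ℕ) × ℤ × ℕ) (β := ι)
  obtain ⟨c, hc⟩ := exists_hilbertBasis_comp b e
  obtain ⟨d, hd⟩ := exists_hilbertBasis_comp c (Equiv.prodAssoc ℕ ℕ (ℤ × ℕ)).symm
  obtain ⟨n, hn⟩ := exists_full_block hsym hs d
  obtain ⟨v, hvW, t, ⟨i₀, ht⟩, ht0, hv⟩ := exists_shift_mem_sq hsym hs c n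
  have hdc : ∀ p : (ℕ × ℕ) × ℤ × ℕ, c p = d (p.1.1, p.1.2, p.2) := fun p =>
    (hd (p.1.1, p.1.2, p.2)).symm
  let K : Set ((ℕ × ℕ) × ℤ × ℕ) := {p | ¬(p.1 = (n, i₀) ∧ p.2.1 = 0)}
  refine ⟨e.symm ⁻¹' K, ?_, ?_, fun u hu => ?_⟩
  · refine Set.infinite_of_injective_forall_mem (f := fun j : ℕ => e ((n, i₀), 1, j)) ?_ ?_
    · intro j j' h
      simpa using h
    · intro j
      simp [K]
  · refine Set.infinite_of_injective_forall_mem (f := fun j : ℕ => e ((n, i₀), 0, j)) ?_ ?_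
    · intro j j' h
      simpa using h
    · intro j
      simp [K]
  have hu' : u ∈ fixator c K := fun p hp => by
    rw [hc]
    exact hu _ (by simpa using hp)
  obtain ⟨D, hD, rfl⟩ := exists_commutator_shift c hv ht hu'
  obtain ⟨h, hW, hhD⟩ := hn D (by
    rintro ⟨n', i, m⟩ hne
    rw [hd]
    exact hD _ fun h => hne (congrArg Prod.fst h))
  rw [commutator_eq_of_eq_on c (S := {p | p.1.1 = n}) (h := h) ?_ ?_]
  · exact mul_mem_pow_add (mul_mem_pow_add (mul_mem_pow_add hW hvW) (inv_mem_pow hsym hW))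
      (inv_mem_pow hsym hvW)
  · rintro ⟨i, k, j⟩ hi
    rw [hv, ht0 _ hi, add_zero]
  · rintro ⟨⟨_, i⟩, m⟩ rfl
    rw [hdc]
    exact hhD (i, m)

theorem exists_perm_image [Countable ι] {S T : Set ι} (hS : S.Infinite) (hS' : Sᶜ.Infinite)
    (hT : T.Infinite) (hT' : Tᶜ.Infinite) : ∃ σ : Equiv.Perm ι, ∀ i, σ i ∈ T ↔ i ∈ S := by
  classical
  have := hS.to_subtype
  have := hS'.to_subtype
  have := hT.to_subtype
  have := hT'.to_subtype
  obtain ⟨e⟩ := nonempty_equiv_of_countable (α := S) (β := T)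
  obtain ⟨e'⟩ := nonempty_equiv_of_countable (α := (Sᶜ : Set ι)) (β := (Tᶜ : Set ι))
  refine ⟨(Equiv.Set.sumCompl S).symm.trans ((e.sumCongr e').trans (Equiv.Set.sumCompl T)),
    fun i => ?_⟩
  by_cases hi : i ∈ S
  · simp [Equiv.Set.sumCompl_symm_apply_of_mem hi, hi]
  · simp only [Equiv.trans_apply, Equiv.Set.sumCompl_symm_apply_of_notMem hi,
      Equiv.sumCongr_apply, Sum.map_inr, Equiv.Set.sumCompl_apply_inr, hi, iff_false]
    exact (e' ⟨i, hi⟩).2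

/-- An uncountable almost disjoint family of subsets of a countable set. -/
theorem exists_almost_disjoint [Countable ι] [Infinite ι] :
    ∃ A : Set ℕ → Set ι, (∀ x, (A x).Infinite) ∧ (∀ x y, (A x ∪ A y)ᶜ.Infinite) ∧
      ∀ x y, x ≠ y → (A x ∩ A y).Finite := by
  classical
  obtain ⟨e⟩ := nonempty_equiv_of_countable (α := ι) (β := ℕ × Finset ℕ)
  refine ⟨fun x => {i | ∀ k, k ∈ (e i).2 ↔ k < (e i).1 ∧ k ∈ x}, fun x => ?_, fun x y => ?_,
    fun x y hxy => ?_⟩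
  · refine Set.infinite_of_injective_forall_mem
      (f := fun n : ℕ => e.symm (n, {k ∈ Finset.range n | k ∈ x})) ?_ ?_
    · intro n m h
      exact (Prod.ext_iff.mp (e.symm.injective h)).1
    · intro n
      simp
  · refine Set.infinite_of_injective_forall_mem (f := fun n : ℕ => e.symm (n, {n})) ?_ ?_
    · intro n m h
      exact (Prod.ext_iff.mp (e.symm.injective h)).1
    · rintro n (h | h) <;> simpa using (h n).mp (by simp)
  · obtain ⟨m, hm⟩ : ∃ m, ¬(m ∈ x ↔ m ∈ y) := by
      by_contra! h
      exact hxy (Set.ext h)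
    refine ((Finset.range (m + 1) ×ˢ (Finset.range (m + 1)).powerset).finite_toSet.preimage
      e.injective.injOn).subset ?_
    rintro i ⟨hx, hy⟩
    have hlt : (e i).1 ≤ m := by
      by_contra! h
      have h1 := hx m
      have h2 := hy m
      simp only [h, true_and] at h1 h2
      exact hm (h1.symm.trans h2)
    simp only [Set.mem_preimage, Finset.mem_coe, Finset.mem_product, Finset.mem_range,
      Finset.mem_powerset]
    refine ⟨by omega, fun k hk => ?_⟩
    have := (hx k).mp hk
    simp only [Finset.mem_range]
    omega

theorem exists_finite_fixator_subset_pow_forty [TopologicalSpace.SeparableSpace H]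
    [Countable ι] [Infinite ι] {W : Set (H ≃ₗᵢ[ℂ] H)}
    (hsym : W⁻¹ = W) {s : ℕ → H ≃ₗᵢ[ℂ] H} (hs : ∀ g, ∃ n, g ∈ s n • W)
    (b : HilbertBasis ι ℂ H) :
    ∃ Φ : Set ι, Φ.Finite ∧ ∀ u ∈ fixator b Φ, u ∈ W ^ 40 := by
  obtain ⟨J, hJ, hJ', hJW⟩ := exists_fixator_subset_pow_eight hsym hs b
  obtain ⟨A, hA, hA', hAfin⟩ := exists_almost_disjoint (ι := ι)
  have hσ : ∀ x, ∃ σ : Equiv.Perm ι, ∀ i, σ i ∈ A x ↔ i ∈ J := fun x =>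
    exists_perm_image hJ hJ' (hA x) (by simpa using hA' x x)
  choose σ hσ using hσ
  choose g hg using fun x => exists_unitary_perm b (σ x)
  have := uncountable_set_nat
  obtain ⟨x, y, hxy, hk⟩ := exists_inv_mul_mem_sq hsym hs g
  have hgk : ∀ i, ((g x)⁻¹ * g y) (b i) = b ((σ x).symm (σ y i)) := fun i => by
    rw [mul_apply, hg, ← inv_apply_self (g x) (b ((σ x).symm _)), hg, Equiv.apply_symm_apply]
  have hJ₁ : J = σ x ⁻¹' A x := Set.ext fun i => (hσ x i).symm
  have hKW : ∀ u ∈ fixator b (σ x ⁻¹' A y), u ∈ W ^ 12 := by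
    intro u hu
    set k := (g x)⁻¹ * g y
    have h : k⁻¹ * u * k ∈ fixator b J := fun i hi => by
      rw [mul_apply, mul_apply, hgk, hu, ← hgk, inv_apply_self]
      simpa using (hσ y i).mpr hi
    have := mul_mem_pow_add (mul_mem_pow_add hk (hJW _ h)) (inv_mem_pow hsym hk)
    simpa [mul_assoc] using this
  refine ⟨σ x ⁻¹' (A x ∩ A y), (hAfin x y hxy).preimage (σ x).injective.injOn, fun u hu => ?_⟩
  have hc : (J ∪ σ x ⁻¹' A y)ᶜ.Infinite := by
    rw [hJ₁, ← Set.preimage_union, ← Set.preimage_compl]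
    exact (hA' x y).preimage (by simp)
  rw [Set.preimage_inter, ← hJ₁] at hu
  obtain ⟨a, ha, d, hd, a', ha', d', hd', rfl⟩ :=
    exists_factorization_of_mem_fixator_inter b.orthonormal hc hu
  exact mul_mem_pow_add (mul_mem_pow_add (mul_mem_pow_add (hJW a ha) (hKW d hd)) (hJW a' ha'))
    (hKW d' hd')

end Fixators

section Neighborhoods

theorem inner_add_smul_add_smul [DecidableEq κ] {e f : κ → H} (he : Orthonormal ℂ e)
    (hf : Orthonormal ℂ f) (hef : ∀ i j, ⟪e i, f j⟫_ℂ = 0) (c s c' s' : ℝ) (i j : κ) :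
    ⟪(c : ℂ) • e i + (s : ℂ) • f i, (c' : ℂ) • e j + (s' : ℂ) • f j⟫_ℂ =
      if i = j then ((c * c' + s * s' : ℝ) : ℂ) else 0 := by
  have hfe : ∀ i j, ⟪f i, e j⟫_ℂ = 0 := fun i j => inner_eq_zero_symm.mp (hef j i)
  simp only [inner_add_left, inner_add_right, inner_smul_left, inner_smul_right, hef, hfe,
    orthonormal_iff_ite.mp he, orthonormal_iff_ite.mp hf, Complex.conj_ofReal]
  split_ifs <;> push_cast <;> ring

theorem isOpen_strongOperatorTopology {S : Set H} (hS : S.Finite) (η : ℝ) :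
    IsOpen[strongOperatorTopology ℂ H] {h : H ≃ₗᵢ[ℂ] H | ∀ x ∈ S, ‖h x - x‖ < η} := by
  refine isOpen_induced_iff.mpr ⟨⋂ x ∈ S, {F : H → H | ‖F x - x‖ < η},
    hS.isOpen_biInter fun x _ => ?_, by ext; simp⟩
  exact isOpen_lt (by fun_prop) continuous_const

variable [CompleteSpace H] [TopologicalSpace.SeparableSpace H]

/-- `W ^ 2` contains an operator rotating a given finite orthonormal family by a nonzero angle. -/
theorem exists_rotation_mem_sq [Finite κ] (hinf : ¬ FiniteDimensional ℂ H)
    {W : Set (H ≃ₗᵢ[ℂ] H)} (hsym : W⁻¹ = W) {s : ℕ → H ≃ₗᵢ[ℂ] H} (hs : ∀ g, ∃ n, g ∈ s n • W)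
    {e : κ → H} (he : Orthonormal ℂ e) :
    ∃ k ∈ W ^ 2, ∃ c s : ℝ, 0 < s ∧ ∃ f : κ → H, Orthonormal ℂ f ∧
      (∀ i j, ⟪e i, f j⟫_ℂ = 0) ∧ ∀ i, k (e i) = (c : ℂ) • e i + (s : ℂ) • f i := by
  classical
  have : FiniteDimensional ℂ (span ℂ (Set.range e)) :=
    FiniteDimensional.span_of_finite ℂ (Set.finite_range _)
  obtain ⟨p, hp, hpS⟩ := exists_orthonormal_mem_orthogonal (κ := κ) hinf (span ℂ (Set.range e))
  have hep : ∀ i j, ⟪e i, p j⟫_ℂ = 0 := fun i j => mem_orthogonal_span_range.mp (hpS j) i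
  have hg : ∀ t : ℝ, ∃ g : H ≃ₗᵢ[ℂ] H, ∀ i, g (e i) =
      (Real.cos (Real.arctan t) : ℂ) • e i + (Real.sin (Real.arctan t) : ℂ) • p i := by
    intro t
    refine exists_unitary_of_inner_eq hinf fun i j => ?_
    rw [inner_add_smul_add_smul he hp hep, orthonormal_iff_ite.mp he]
    simp [← pow_two]
  choose g hg using hg
  obtain ⟨x, y, hxy, hk⟩ := exists_inv_mul_mem_sq hsym hs g
  set k := (g x)⁻¹ * g y
  set α := Real.arctan x - Real.arctan y with hα
  have hin : ∀ i j, ⟪e i, k (e j)⟫_ℂ = if i = j then (Real.cos α : ℂ) else 0 := by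
    intro i j
    rw [mul_apply, inner_apply_inv, hg, hg, inner_add_smul_add_smul he hp hep, hα, Real.cos_sub]
  have hin' : ∀ i j, ⟪k (e i), e j⟫_ℂ = if i = j then (Real.cos α : ℂ) else 0 := by
    intro i j
    rw [← inner_conj_symm, hin]
    simp only [eq_comm, apply_ite (starRingEnd ℂ), Complex.conj_ofReal, map_zero]
  have hα0 : Real.sin α ≠ 0 := by
    intro h
    rw [Real.sin_eq_zero_iff_of_lt_of_lt] at h
    · exact hxy (Real.arctan_injective (sub_eq_zero.mp h))
    · linarith [Real.neg_pi_div_two_lt_arctan x, Real.arctan_lt_pi_div_two y]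
    · linarith [Real.neg_pi_div_two_lt_arctan y, Real.arctan_lt_pi_div_two x]
  have hs0 : 0 < |Real.sin α| := abs_pos.mpr hα0
  have hs1 : ((|Real.sin α| : ℝ) : ℂ) ≠ 0 := by exact_mod_cast hs0.ne'
  have hs2 : ((|Real.sin α| : ℝ) : ℂ) ^ 2 = 1 - (Real.cos α : ℂ) ^ 2 := by
    have : |Real.sin α| ^ 2 = 1 - Real.cos α ^ 2 := by rw [sq_abs, Real.sin_sq]
    exact_mod_cast this
  refine ⟨k, hk, Real.cos α, |Real.sin α|, hs0,
    fun i => ((|Real.sin α| : ℝ) : ℂ)⁻¹ • (k (e i) - (Real.cos α : ℂ) • e i), ?_, ?_, ?_⟩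
  · rw [orthonormal_iff_ite]
    intro i j
    simp only [inner_smul_left, inner_smul_right, inner_sub_left, inner_sub_right, hin, hin',
      LinearIsometryEquiv.inner_map_map, orthonormal_iff_ite.mp he, map_inv₀, Complex.conj_ofReal]
    split_ifs
    · field_simp
      rw [hs2]
      ring
    · simp
  · intro i j
    simp only [inner_smul_right, inner_sub_right, hin, orthonormal_iff_ite.mp he]
    split_ifs <;> simp
  · intro i
    rw [smul_inv_smul₀ hs1, add_sub_cancel]

open scoped ComplexOrder in
/-- A unitary operator almost fixing a finite orthonormal family `e` is a product of five
operators fixing alternately `e` and a rotated copy of `e`. -/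
theorem exists_factorization_of_near [Fintype κ] (hinf : ¬ FiniteDimensional ℂ H)
    {e f p : κ → H} (he : Orthonormal ℂ e) (hf : Orthonormal ℂ f)
    (hef : ∀ i j, ⟪e i, f j⟫_ℂ = 0) {c s : ℝ} (hs : 0 < s)
    (hp : ∀ i, p i = (c : ℂ) • e i + (s : ℂ) • f i) {h : H ≃ₗᵢ[ℂ] H}
    (hh : ∀ i, ‖h (e i) - e i‖ ≤ 1 / (1 + 4 * (c / s) ^ 2 * Fintype.card κ ^ 2)) :
    ∃ a₁ ∈ fixator e Set.univ, ∃ b₁ ∈ fixator p Set.univ, ∃ a₂ ∈ fixator e Set.univ,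
      ∃ b₂ ∈ fixator p Set.univ, ∃ a₃ ∈ fixator e Set.univ, h = a₁ * b₁ * a₂ * b₂ * a₃ := by
  classical
  set r := c / s with hr
  have hsr : (s : ℂ) * r = c := by
    rw [hr]
    push_cast
    exact mul_div_cancel₀ _ (by exact_mod_cast hs.ne')
  have hpos : 0 < 1 + 4 * r ^ 2 * (Fintype.card κ : ℝ) ^ 2 := by positivity
  set δ := 1 / (1 + 4 * r ^ 2 * (Fintype.card κ : ℝ) ^ 2) with hδ
  have hδ0 : 0 < δ := by positivity
  have hδ1 : δ * (1 + 4 * r ^ 2 * (Fintype.card κ : ℝ) ^ 2) = 1 := one_div_mul_cancel hpos.ne'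
  let M : Matrix κ κ ℂ := Matrix.of fun j i => ⟪e j, h (e i)⟫_ℂ
  let M₀ : Matrix κ κ ℂ := ((1 - δ : ℝ) : ℂ) • 1
  let T₁ : Matrix κ κ ℂ := ((r * δ : ℝ) : ℂ) • 1
  let T₂ : Matrix κ κ ℂ := (r : ℂ) • (M - M₀)
  have hpsd : ∀ N : Matrix κ κ ℂ, (∀ i j, ‖N i j‖ ≤ 2 * |r| * δ) →
      (1 - M₀.conjTranspose * M₀ - N.conjTranspose * N).PosSemidef := by
    intro N hN
    have h1 : 1 - M₀.conjTranspose * M₀ = ((2 * δ - δ ^ 2 : ℝ) : ℂ) • (1 : Matrix κ κ ℂ) := by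
      simp only [M₀, Matrix.conjTranspose_smul, Matrix.conjTranspose_one, RCLike.star_def,
        Complex.conj_ofReal, Matrix.smul_mul, one_mul, smul_smul]
      nth_rewrite 1 [← one_smul ℂ (1 : Matrix κ κ ℂ)]
      rw [← sub_smul]
      congr 1
      push_cast
      ring
    rw [h1]
    refine posSemidef_smul_one_sub ?_
    calc ∑ i, ∑ j, ‖N i j‖ ^ 2 ≤ ∑ _i : κ, ∑ _j : κ, (2 * |r| * δ) ^ 2 := by
          gcongr
          exact hN _ _
      _ = δ * (δ * (4 * r ^ 2 * (Fintype.card κ : ℝ) ^ 2)) := by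
          simp only [Finset.sum_const, Finset.card_univ, nsmul_eq_mul, mul_pow, sq_abs]
          ring
      _ ≤ δ * (2 - δ) := by gcongr; linarith
      _ = 2 * δ - δ ^ 2 := by ring
  have hM : ∀ i j, ‖(M - M₀) i j‖ ≤ 2 * δ := by
    intro i j
    have h1 : (M - M₀) i j = ⟪e i, h (e j) - e j⟫_ℂ + δ * (1 : Matrix κ κ ℂ) i j := by
      simp only [M, M₀, Matrix.sub_apply, Matrix.of_apply, Matrix.smul_apply, smul_eq_mul,
        inner_sub_right, orthonormal_iff_ite.mp he, Matrix.one_apply]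
      push_cast
      ring
    rw [h1]
    refine (norm_add_le _ _).trans ?_
    have h2 : ‖⟪e i, h (e j) - e j⟫_ℂ‖ ≤ δ := by
      refine (norm_inner_le_norm _ _).trans ?_
      rw [he.1, one_mul]
      exact hh j
    have h3 : ‖(δ : ℂ) * (1 : Matrix κ κ ℂ) i j‖ ≤ δ := by
      rw [norm_mul, Complex.norm_of_nonneg hδ0.le, Matrix.one_apply]
      split_ifs <;> simp [hδ0.le]
    linarith
  obtain ⟨v₁, hv₁, he₁, hf₁⟩ := exists_orthonormal_with_coefficients hinf he hf hef
    (hpsd T₁ fun i j => by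
      simp only [T₁, Matrix.smul_apply, Matrix.one_apply, smul_eq_mul]
      split_ifs
      · rw [mul_one, Complex.norm_real, Real.norm_eq_abs, abs_mul, abs_of_pos hδ0]
        nlinarith [mul_nonneg (abs_nonneg r) hδ0.le]
      · rw [mul_zero, norm_zero]
        positivity)
  obtain ⟨v₂, hv₂, he₂, hf₂⟩ := exists_orthonormal_with_coefficients hinf he hf hef
    (hpsd T₂ fun i j => by
      simp only [T₂, Matrix.smul_apply, smul_eq_mul]
      rw [norm_mul, Complex.norm_real, Real.norm_eq_abs]
      nlinarith [mul_le_mul_of_nonneg_left (hM i j) (abs_nonneg r)])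
  obtain ⟨v₃, hv₃, he₃, hf₃⟩ := exists_orthonormal_with_coefficients hinf he hf hef
    (M := M) (T := 0) (by
      simpa using posSemidef_one_sub_of_orthonormal he (orthonormal_map h he))
  have hpv : ∀ i w, ⟪p i, w⟫_ℂ = c * ⟪e i, w⟫_ℂ + s * ⟪f i, w⟫_ℂ := fun i w => by
    rw [hp, inner_add_left, inner_smul_left, inner_smul_left, Complex.conj_ofReal,
      Complex.conj_ofReal]
  have hfe : ∀ i j, ⟪f i, e j⟫_ℂ = 0 := fun i j => inner_eq_zero_symm.mp (hef j i)
  obtain ⟨b₂, hb₂, hb₂v⟩ := exists_unitary_fixing hinf (p := p) he hv₁ fun i j => by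
    rw [hpv, hpv, he₁, hf₁, hfe, orthonormal_iff_ite.mp he]
    simp only [M₀, T₁, Matrix.smul_apply, Matrix.one_apply, smul_eq_mul]
    push_cast
    linear_combination (-δ * if i = j then 1 else 0 : ℂ) * hsr
  obtain ⟨a₂, ha₂, ha₂v⟩ := exists_unitary_fixing hinf (p := e) hv₁ hv₂ fun i j => by
    rw [he₁, he₂]
  obtain ⟨b₁, hb₁, hb₁v⟩ := exists_unitary_fixing hinf (p := p) hv₂ hv₃ fun i j => by
    rw [hpv, hpv, he₂, hf₂, he₃, hf₃]
    simp only [T₂, Matrix.smul_apply, Matrix.sub_apply, Matrix.zero_apply, smul_eq_mul]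
    linear_combination (M i j - M₀ i j) * hsr
  obtain ⟨a₁, ha₁, ha₁v⟩ := exists_unitary_fixing hinf (p := e) hv₃ (orthonormal_map h he)
    fun i j => by rw [he₃]; rfl
  refine ⟨a₁, ha₁, b₁, hb₁, a₂, ha₂, b₂, hb₂, (a₁ * b₁ * a₂ * b₂)⁻¹ * h, fun i _ => ?_, by group⟩
  have : (a₁ * b₁ * a₂ * b₂) (e i) = h (e i) := by
    simp only [mul_apply]
    rw [hb₂v, ha₂v, hb₁v, ha₁v]
  rw [mul_apply, ← this, inv_apply_self]

end Neighborhoods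

end UnitarySteinhaus

open UnitarySteinhaus

/-- If `H` is an infinite-dimensional separable complex Hilbert space and `W` is a symmetric,
countably syndetic subset of the unitary group `U(H)`, then `W ^ 506` contains an open
neighborhood of the identity in the strong operator topology. -/
theorem steinhaus_unitaryGroup
    {H : Type*} [NormedAddCommGroup H] [InnerProductSpace ℂ H] [CompleteSpace H]
    [TopologicalSpace.SeparableSpace H] (hinf : ¬ FiniteDimensional ℂ H)
    (W : Set (H ≃ₗᵢ[ℂ] H)) (hsym : W⁻¹ = W)
    (hsynd : ∃ s : ℕ → (H ≃ₗᵢ[ℂ] H), ∀ g : (H ≃ₗᵢ[ℂ] H), ∃ n : ℕ, g ∈ s n • W) :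
    ∃ V : Set (H ≃ₗᵢ[ℂ] H),
      IsOpen[strongOperatorTopology ℂ H] V ∧ (1 : (H ≃ₗᵢ[ℂ] H)) ∈ V ∧ V ⊆ W ^ 506 := by
  obtain ⟨s, hs⟩ := hsynd
  have hne : W.Nonempty := by
    obtain ⟨n, w, hw, -⟩ := hs 1
    exact ⟨w, hw⟩
  obtain ⟨b⟩ := exists_hilbertBasis_nat hinf
  obtain ⟨Φ, hΦ, hΦW⟩ := exists_finite_fixator_subset_pow_forty hsym hs b
  have : Fintype Φ := hΦ.fintype
  have he : Orthonormal ℂ fun i : Φ => b i := b.orthonormal.comp _ Subtype.val_injective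
  obtain ⟨k, hk, c, t, ht, f, hf, hef, hkf⟩ := exists_rotation_mem_sq hinf hsym hs he
  have hA : ∀ a ∈ fixator (fun i : Φ => b i) Set.univ, a ∈ W ^ 40 := fun a ha =>
    hΦW a fun i hi => ha ⟨i, hi⟩ trivial
  have hB : ∀ a ∈ fixator (fun i : Φ => k (b i)) Set.univ, a ∈ W ^ 44 := by
    intro a ha
    have h : k⁻¹ * a * k ∈ W ^ 40 := hA _ fun i hi => by
      rw [mul_apply, mul_apply, ha i hi, inv_apply_self]
    have := mul_mem_pow_add (mul_mem_pow_add hk h) (inv_mem_pow hsym hk)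
    simpa [mul_assoc] using this
  refine ⟨_, isOpen_strongOperatorTopology (hΦ.image b)
    (1 / (1 + 4 * (c / t) ^ 2 * Fintype.card Φ ^ 2)), fun x _ => ?_, fun h hh => ?_⟩
  · change ‖x - x‖ < _
    rw [sub_self, norm_zero]
    positivity
  obtain ⟨a₁, ha₁, b₁, hb₁, a₂, ha₂, b₂, hb₂, a₃, ha₃, rfl⟩ :=
    exists_factorization_of_near hinf he hf hef ht hkf (h := h)
      fun i => (hh _ (Set.mem_image_of_mem b i.2)).le
  exact pow_subset_pow_add_two_mul hsym hne 208 149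
    (mul_mem_pow_add (mul_mem_pow_add (mul_mem_pow_add (mul_mem_pow_add (hA _ ha₁) (hB _ hb₁))
      (hA _ ha₂)) (hB _ hb₂)) (hA _ ha₃))
end

section
/- Let H be an infinite-dimensional separable real Hilbert space. If W is a symmetric, countably syndetic subset of the orthogonal group O(H), then W^506 contains an open neighborhood of the identity in the strong operator topology. -/
open Pointwise Topology

section BasisOperators

variable {H : Type*} [NormedAddCommGroup H] [InnerProductSpace ℝ H] {I : Type*}

/-- The subgroup of orthogonal operators fixing every vector `e i` with `i ∈ S`. -/
def vectorFixer (e : I → H) (S : Set I) : Subgroup (H ≃ₗᵢ[ℝ] H) where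
  carrier := {u | ∀ i ∈ S, u (e i) = e i}
  one_mem' := fun _ _ => rfl
  mul_mem' := fun {u v} hu hv i hi => by
    rw [LinearIsometryEquiv.coe_mul, Function.comp_apply, hv i hi, hu i hi]
  inv_mem' := fun {u} hu i hi => by
    rw [LinearIsometryEquiv.coe_inv, LinearIsometryEquiv.symm_apply_eq, hu i hi]

theorem inv_mul_apply_eq_iff (u v : H ≃ₗᵢ[ℝ] H) (x y : H) : (u⁻¹ * v) x = y ↔ v x = u y := by
  rw [LinearIsometryEquiv.coe_mul, Function.comp_apply, LinearIsometryEquiv.coe_inv,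
    LinearIsometryEquiv.symm_apply_eq]

theorem inv_apply_eq_iff (u : H ≃ₗᵢ[ℝ] H) (x y : H) : u⁻¹ x = y ↔ x = u y := by
  rw [LinearIsometryEquiv.coe_inv, LinearIsometryEquiv.symm_apply_eq]

theorem mul_apply_isometry (u v : H ≃ₗᵢ[ℝ] H) (x : H) : (u * v) x = u (v x) := rfl

theorem inner_eq_zero_of_mem_vectorFixer {e : I → H} (he : Orthonormal ℝ e)
    {S : Set I} {u : H ≃ₗᵢ[ℝ] H} (hu : u ∈ vectorFixer e S) {i j : I} (hj : j ∈ S) (hi : i ∉ S) :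
    inner ℝ (e j) (u (e i)) = 0 := by
  rw [← hu j hj, u.inner_map_map]
  exact he.2 (fun h => hi (h ▸ hj))

namespace HilbertBasis

theorem isometryEquiv_ext (b : HilbertBasis I ℝ H) {u v : H ≃ₗᵢ[ℝ] H}
    (h : ∀ i, u (b i) = v (b i)) : u = v := by
  ext x
  have h1 := (b.hasSum_repr x).mapL (u.toContinuousLinearEquiv : H →L[ℝ] H)
  have h2 := (b.hasSum_repr x).mapL (v.toContinuousLinearEquiv : H →L[ℝ] H)
  simp only [map_smul] at h1 h2
  have h3 : ∀ i, (u.toContinuousLinearEquiv : H →L[ℝ] H) (b i) =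
    (v.toContinuousLinearEquiv : H →L[ℝ] H) (b i) := h
  simp only [h3] at h1
  exact h1.unique h2

theorem exists_isometryEquiv (b b' : HilbertBasis I ℝ H) :
    ∃ u : H ≃ₗᵢ[ℝ] H, ∀ i, u (b i) = b' i := by
  refine ⟨b.repr.trans b'.repr.symm, fun i => ?_⟩
  classical
  rw [LinearIsometryEquiv.trans_apply, b.repr_self, b'.repr_symm_single]

theorem apply_eq_self_of_mem_vectorFixer (b : HilbertBasis I ℝ H) {S : Set I} {u : H ≃ₗᵢ[ℝ] H}
    (hu : u ∈ vectorFixer b S) {x : H} (hx : ∀ i ∉ S, inner ℝ (b i) x = 0) : u x = x := by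
  have h1 := (b.hasSum_repr x).mapL (u.toContinuousLinearEquiv : H →L[ℝ] H)
  simp only [map_smul] at h1
  refine h1.unique ?_
  convert b.hasSum_repr x using 2 with i
  by_cases hi : i ∈ S
  · congr 1
    exact hu i hi
  · rw [b.repr_apply_apply, hx i hi, zero_smul, zero_smul]

theorem commute_of_union_eq_univ (b : HilbertBasis I ℝ H) {S T : Set I} (hST : S ∪ T = Set.univ)
    {u v : H ≃ₗᵢ[ℝ] H} (hu : u ∈ vectorFixer b S) (hv : v ∈ vectorFixer b T) :
    u * v = v * u := by
  have key : ∀ {S T : Set I}, S ∪ T = Set.univ → ∀ {u v : H ≃ₗᵢ[ℝ] H}, u ∈ vectorFixer b S →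
      v ∈ vectorFixer b T → ∀ i ∈ S, u (v (b i)) = v (u (b i)) := by
    intro S T hST u v hu hv i hi
    rw [hu i hi]
    by_cases hiT : i ∈ T
    · rw [hv i hiT, hu i hi]
    · refine b.apply_eq_self_of_mem_vectorFixer hu fun j hj => ?_
      have : j ∈ S ∪ T := hST ▸ Set.mem_univ j
      exact inner_eq_zero_of_mem_vectorFixer b.orthonormal hv (this.resolve_left hj) hiT
  refine b.isometryEquiv_ext fun i => ?_
  have : i ∈ S ∪ T := hST ▸ Set.mem_univ i
  rcases this with hi | hi
  · exact key hST hu hv i hi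
  · exact (key (Set.union_comm S T ▸ hST) hv hu i hi).symm

theorem exists_glue [CompleteSpace H] (b : HilbertBasis I ℝ H) {P : Type*} (p : I → P)
    (U : P → H ≃ₗᵢ[ℝ] H) (hU : ∀ q, U q ∈ vectorFixer b {i | p i ≠ q}) :
    ∃ g : H ≃ₗᵢ[ℝ] H, ∀ i, g (b i) = U (p i) (b i) := by
  have ho : Orthonormal ℝ fun i => U (p i) (b i) := by
    refine ⟨fun i => by rw [LinearIsometryEquiv.norm_map]; exact b.orthonormal.1 i, ?_⟩
    intro i j hij
    by_cases hp : p i = p j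
    · simp only [hp, LinearIsometryEquiv.inner_map_map]
      exact b.orthonormal.2 hij
    · simp only
      have h1 : U (p i) (U (p j) (b j)) = U (p j) (b j) := by
        refine b.apply_eq_self_of_mem_vectorFixer (hU (p i)) fun l hl => ?_
        have hl' : p l = p i := not_not.1 hl
        exact inner_eq_zero_of_mem_vectorFixer b.orthonormal (hU (p j))
          (fun h => hp (hl' ▸ h)) (fun h => h rfl)
      rw [← h1, LinearIsometryEquiv.inner_map_map]
      exact inner_eq_zero_of_mem_vectorFixer b.orthonormal (hU (p j)) hp (fun h => h rfl)
  have hd : (Submodule.span ℝ (Set.range fun i => U (p i) (b i)))ᗮ = ⊥ := by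
    rw [Submodule.eq_bot_iff]
    intro x hx
    have hx' : ∀ i, inner ℝ (U (p i) (b i)) x = 0 := fun i =>
      (Submodule.mem_orthogonal _ _).1 hx _ (Submodule.subset_span ⟨i, rfl⟩)
    have h0 : ∀ i, inner ℝ (b i) x = 0 := by
      intro i
      have h1 : ∀ j, p j = p i → inner ℝ (b j) ((U (p i))⁻¹ x) = 0 := by
        intro j hj
        rw [← hx' j, ← LinearIsometryEquiv.inner_map_map (U (p i)), hj]
        congr 1
        exact (U (p i)).apply_symm_apply x
      have h2 : U (p i) ((U (p i))⁻¹ x) = (U (p i))⁻¹ x :=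
        b.apply_eq_self_of_mem_vectorFixer (hU (p i)) fun j hj => h1 j (not_not.1 hj)
      rw [← h1 i rfl, ← h2]
      congr 1
      exact ((U (p i)).apply_symm_apply x).symm
    have h3 : b.repr x = 0 := by
      ext i
      rw [b.repr_apply_apply, h0 i]; rfl
    simpa using h3
  obtain ⟨g, hg⟩ := b.exists_isometryEquiv (HilbertBasis.mkOfOrthogonalEqBot ho hd)
  exact ⟨g, fun i => by rw [hg, HilbertBasis.coe_mkOfOrthogonalEqBot]⟩

theorem exists_reindex [CompleteSpace H] {J : Type*} (b : HilbertBasis I ℝ H) (σ : J ≃ I) :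
    ∃ b' : HilbertBasis J ℝ H, ∀ j, b' j = b (σ j) := by
  have hd : (Submodule.span ℝ (Set.range (b ∘ σ)))ᗮ = ⊥ := by
    rw [σ.surjective.range_comp, ← Submodule.topologicalClosure_eq_top_iff]
    exact b.dense_span
  exact ⟨HilbertBasis.mkOfOrthogonalEqBot (b.orthonormal.comp σ σ.injective) hd,
    fun j => by rw [HilbertBasis.coe_mkOfOrthogonalEqBot]; rfl⟩

theorem exists_permutation [CompleteSpace H] (b : HilbertBasis I ℝ H) (σ : Equiv.Perm I) :
    ∃ s : H ≃ₗᵢ[ℝ] H, ∀ i, s (b i) = b (σ i) := by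
  obtain ⟨b', hb'⟩ := b.exists_reindex σ
  obtain ⟨g, hg⟩ := b.exists_isometryEquiv b'
  exact ⟨g, fun i => by rw [hg, hb']⟩

theorem eq_commutator [CompleteSpace H] (b : HilbertBasis I ℝ H) (σ : Equiv.Perm I)
    (p : I → Option ℕ) (hsucc : ∀ i m, p i = some m → p (σ i) = some (m + 1))
    (hnone : ∀ i, p i = none → p (σ i) = none ∨ p (σ i) = some 0)
    {s u : H ≃ₗᵢ[ℝ] H} (hs : ∀ i, s (b i) = b (σ i)) (hu : u ∈ vectorFixer b {i | p i ≠ some 0}) :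
    ∃ g ∈ vectorFixer b {i | p i = none}, u = g * s * g⁻¹ * s⁻¹ := by
  let U : Option ℕ → H ≃ₗᵢ[ℝ] H := fun o => o.elim 1 fun m => s ^ m * u * (s ^ m)⁻¹
  have hpow : ∀ (m : ℕ) i, (s ^ m) (b i) = b ((σ ^ m) i) := by
    intro m
    induction m with
    | zero => intro i; rfl
    | succ m ih =>
      intro i
      rw [pow_succ, pow_succ, mul_apply_isometry, hs, ih]; rfl
  have hp : ∀ (m : ℕ) i, p i = some 0 → p ((σ ^ m) i) = some m := by
    intro m i hi
    induction m with
    | zero => exact hi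
    | succ m ih =>
      rw [pow_succ']
      exact hsucc _ _ ih
  have hU : ∀ q, U q ∈ vectorFixer b {i | p i ≠ q} := by
    rintro (_ | m) i hi
    · rfl
    · change (s ^ m * u * (s ^ m)⁻¹) (b i) = b i
      obtain ⟨j, rfl⟩ := (σ ^ m).surjective i
      have h1 : (s ^ m)⁻¹ (b ((σ ^ m) j)) = b j := by
        rw [inv_apply_eq_iff, hpow]
      rw [mul_apply_isometry, h1, mul_apply_isometry, hu j, hpow]
      exact fun h => hi (hp m j h)
  obtain ⟨g, hg⟩ := b.exists_glue p U hU
  have hgn : ∀ i, p i = none → g (b i) = b i := fun i hi => by rw [hg, hi]; rfl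
  refine ⟨g, hgn, ?_⟩
  suffices h : g * s = u * s * g by
    rw [h]; group
  refine b.isometryEquiv_ext fun i => ?_
  simp only [mul_apply_isometry]
  rw [hs]
  rcases hi : p i with _ | m
  · rw [hgn i hi, hs]
    rcases hnone i hi with h | h
    · rw [hgn _ h, hu]
      simp [h]
    · rw [hg, h]
      change (s ^ 0 * u * (s ^ 0)⁻¹) _ = _
      simp
  · have h1 := hsucc i m hi
    have h2 : U (some (m + 1)) * s = s * U (some m) := by
      change s ^ (m + 1) * u * (s ^ (m + 1))⁻¹ * s = s * (s ^ m * u * (s ^ m)⁻¹)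
      rw [pow_succ']; group
    have h3 : u * U (some (m + 1)) = U (some (m + 1)) * u := by
      refine b.commute_of_union_eq_univ ?_ hu (hU (some (m + 1)))
      ext j
      simp only [Set.mem_union, Set.mem_ofPred_eq, Set.mem_univ, iff_true]
      by_contra! h
      rw [h.1] at h
      simp at h
    have h4 : s (g (b i)) = U (some (m + 1)) (b (σ i)) := by
      rw [hg, hi, ← mul_apply_isometry, ← h2, mul_apply_isometry, hs]
    rw [h4, hg, h1, ← mul_apply_isometry, h3, mul_apply_isometry, hu]
    simp [h1]

end HilbertBasis

end BasisOperators

section Syndetic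

variable {G : Type*} [Group G] {W : Set G}

theorem inv_mul_mem_sq (hsym : W⁻¹ = W) {t g h : G} (hg : g ∈ t • W) (hh : h ∈ t • W) :
    g⁻¹ * h ∈ W ^ 2 := by
  obtain ⟨a, ha, rfl⟩ := hg
  obtain ⟨c, hc, rfl⟩ := hh
  have : (t • a)⁻¹ * t • c = a⁻¹ * c := by simp [smul_eq_mul]
  simp only [this, sq]
  exact Set.mul_mem_mul (hsym ▸ Set.inv_mem_inv.2 ha) hc

theorem exists_ne_inv_mul_mem_sq (hsym : W⁻¹ = W) {s : ℕ → G} (hs : ∀ g, ∃ n, g ∈ s n • W)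
    {X : Type*} [Uncountable X] (h : X → G) : ∃ x y, x ≠ y ∧ (h x)⁻¹ * h y ∈ W ^ 2 := by
  choose n hn using fun x => hs (h x)
  have : ¬ Function.Injective n := fun hinj => not_countable (hinj.countable)
  simp only [Function.Injective, not_forall] at this
  obtain ⟨x, y, hxy, hne⟩ := this
  exact ⟨x, y, hne, inv_mul_mem_sq hsym (hn x) (hxy ▸ hn y)⟩

theorem inv_mem_pow (hsym : W⁻¹ = W) {n : ℕ} {g : G} (hg : g ∈ W ^ n) : g⁻¹ ∈ W ^ n := by
  rw [← hsym, inv_pow]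
  exact Set.inv_mem_inv.2 hg

theorem mul_mem_pow_add {m n : ℕ} {g h : G} (hg : g ∈ W ^ m) (hh : h ∈ W ^ n) :
    g * h ∈ W ^ (m + n) := by
  rw [pow_add]
  exact Set.mul_mem_mul hg hh

end Syndetic

section FixerInPower

variable {H : Type*} [NormedAddCommGroup H] [InnerProductSpace ℝ H] [CompleteSpace H] {I : Type*}
  {W : Set (H ≃ₗᵢ[ℝ] H)}

theorem uncountable_nat_to_bool : Uncountable (ℕ → Bool) := by
  rw [← Cardinal.aleph0_lt_mk_iff]
  simpa using Cardinal.cantor Cardinal.aleph0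

theorem exists_block_extension (b : HilbertBasis I ℝ H) (p : I → ℕ) (hsym : W⁻¹ = W)
    {s : ℕ → (H ≃ₗᵢ[ℝ] H)} (hs : ∀ g, ∃ n, g ∈ s n • W) :
    ∃ n, ∀ u ∈ vectorFixer b {i | p i ≠ n}, ∃ g ∈ W ^ 2, ∀ i, p i = n → g (b i) = u (b i) := by
  have key : ∃ n, ∀ u ∈ vectorFixer b {i | p i ≠ n}, ∃ g ∈ s n • W,
      ∀ i, p i = n → g (b i) = u (b i) := by
    by_contra! hcon
    choose U hU hbad using hcon
    obtain ⟨g, hg⟩ := b.exists_glue p U hU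
    obtain ⟨n, hn⟩ := hs g
    obtain ⟨i, hi, hne⟩ := hbad n g hn
    exact hne (by rw [hg, hi])
  obtain ⟨n, hn⟩ := key
  refine ⟨n, fun u hu => ?_⟩
  obtain ⟨g, hg, hgu⟩ := hn u hu
  obtain ⟨g', hg', hgu'⟩ := hn 1 (one_mem _)
  refine ⟨g'⁻¹ * g, inv_mul_mem_sq hsym hg' hg, fun i hi => ?_⟩
  have hfix : u (b i) = g' (u (b i)) := by
    refine (b.apply_eq_self_of_mem_vectorFixer (S := {i | p i = n}) (fun j hj => hgu' j hj)
      fun j hj => ?_).symm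
    exact inner_eq_zero_of_mem_vectorFixer b.orthonormal hu hj (fun h => h hi)
  rw [inv_mul_apply_eq_iff, hgu i hi]
  exact hfix

/-- The permutation translating the integer coordinate by an amount depending on the first one. -/
def shiftPerm {A B : Type*} (c : A → ℤ) : Equiv.Perm (A × ℤ × B) where
  toFun i := (i.1, i.2.1 + c i.1, i.2.2)
  invFun i := (i.1, i.2.1 - c i.1, i.2.2)
  left_inv i := by simp
  right_inv i := by simp

theorem exists_vectorFixer_subset_pow_eight (b : HilbertBasis ((ℕ × ℕ) × ℤ × ℕ) ℝ H)
    (hsym : W⁻¹ = W) {s : ℕ → (H ≃ₗᵢ[ℝ] H)} (hs : ∀ g, ∃ n, g ∈ s n • W) :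
    ∃ S : Set ((ℕ × ℕ) × ℤ × ℕ), S.Infinite ∧ Sᶜ.Infinite ∧
      (vectorFixer b S : Set (H ≃ₗᵢ[ℝ] H)) ⊆ W ^ 8 := by
  classical
  obtain ⟨n, hn⟩ := exists_block_extension b (fun i => i.1.1) hsym hs
  let c : (ℕ → Bool) → ℕ × ℕ → ℤ := fun x a => if a.1 = n ∧ x a.2 = true then 1 else 0
  choose T hT using fun x => b.exists_permutation (shiftPerm (c x))
  obtain ⟨x, y, i, hxi, hyi, hw⟩ : ∃ x y i, x i = false ∧ y i = true ∧ (T x)⁻¹ * T y ∈ W ^ 2 := by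
    have := uncountable_nat_to_bool
    obtain ⟨x, y, hne, hw⟩ := exists_ne_inv_mul_mem_sq hsym hs T
    obtain ⟨i, hi⟩ := Function.ne_iff.1 hne
    cases hx : x i <;> cases hy : y i
    · simp [hx, hy] at hi
    · exact ⟨x, y, i, hx, hy, hw⟩
    · refine ⟨y, x, i, hy, hx, ?_⟩
      have := inv_mem_pow hsym hw
      rwa [mul_inv_rev, inv_inv] at this
    · simp [hx, hy] at hi
  set w := (T x)⁻¹ * T y with hwdef
  let d : ℕ × ℕ → ℤ := fun a => c y a - c x a
  have hdi : d (n, i) = 1 := by simp [d, c, hxi, hyi]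
  have hd0 : ∀ a : ℕ × ℕ, a.1 ≠ n → d a = 0 := fun a ha => by simp [d, c, ha]
  have hwb : ∀ j, w (b j) = b (shiftPerm d j) := by
    intro j
    rw [hwdef, inv_mul_apply_eq_iff, hT, hT]
    congr 1
    simp only [shiftPerm, Equiv.coe_fn_mk, d]
    ext <;> simp; ring
  let p : (ℕ × ℕ) × ℤ × ℕ → Option ℕ := fun j =>
    if j.1 = (n, i) ∧ 0 ≤ j.2.1 then some j.2.1.toNat else none
  have hp0 : ∀ j, p j = some 0 ↔ j.1 = (n, i) ∧ j.2.1 = 0 := by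
    intro j
    simp only [p]
    split_ifs with h
    · simp only [Option.some.injEq, h.1, true_and]
      lia
    · simp only [false_iff]
      rintro ⟨h1, h2⟩
      exact h ⟨h1, h2.ge⟩
  refine ⟨{j | p j ≠ some 0}, ?_, ?_, fun u hu => ?_⟩
  · refine Set.infinite_of_injective_forall_mem (f := fun k : ℕ => ((n, i), ((1 : ℤ), k)))
      (fun k l h => by simpa using h) fun k h => ?_
    simpa using ((hp0 _).1 h).2
  · refine Set.infinite_of_injective_forall_mem (f := fun k : ℕ => ((n, i), ((0 : ℤ), k)))
      (fun k l h => by simpa using h) fun k h => ?_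
    exact h ((hp0 _).2 ⟨rfl, rfl⟩)
  · have hsucc : ∀ j m, p j = some m → p (shiftPerm d j) = some (m + 1) := by
      intro j m hj
      simp only [p] at hj ⊢
      split_ifs at hj with h
      simp only [Option.some.injEq] at hj
      have : (shiftPerm d j).2.1 = j.2.1 + 1 := by simp [shiftPerm, h.1, hdi]
      rw [if_pos ⟨h.1, by lia⟩, this]
      congr 1
      lia
    have hnone : ∀ j, p j = none → p (shiftPerm d j) = none ∨ p (shiftPerm d j) = some 0 := by
      intro j hj
      by_cases h : j.1 = (n, i)
      · have h2 : (shiftPerm d j).2.1 = j.2.1 + 1 := by simp [shiftPerm, h, hdi]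
        have h3 : ¬ 0 ≤ j.2.1 := by
          intro h3
          simp [p, h, h3] at hj
        by_cases h4 : j.2.1 + 1 = 0
        · exact Or.inr ((hp0 _).2 ⟨h, h2.trans h4⟩)
        · left
          simp only [p]
          rw [if_neg]
          rw [h2]
          lia
      · left
        simp only [p]
        rw [if_neg]
        exact fun h' => h h'.1
    obtain ⟨g, hg, hgu⟩ := b.eq_commutator (shiftPerm d) p hsucc hnone hwb hu
    obtain ⟨g', hg', hgg'⟩ := hn g fun j hj => hg j <| by
      simp only [p, Set.mem_ofPred_eq]
      rw [if_neg]
      rintro ⟨h, -⟩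
      exact hj (by rw [h])
    have hcomm : (g⁻¹ * g') * w = w * (g⁻¹ * g') := by
      refine b.commute_of_union_eq_univ (S := {j | j.1.1 = n}) (T := {j | j.1.1 ≠ n}) ?_ ?_ ?_
      · ext j
        simp [em]
      · intro j hj
        rw [inv_mul_apply_eq_iff, hgg' j hj]
      · intro j hj
        rw [hwb]
        congr 1
        simp [shiftPerm, hd0 _ hj]
    have hconj : g * w * g⁻¹ = g' * w * g'⁻¹ := by
      calc g * w * g⁻¹ = g * (w * (g⁻¹ * g')) * g'⁻¹ := by group
        _ = g' * w * g'⁻¹ := by rw [← hcomm]; group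
    rw [hgu, hconj]
    exact mul_mem_pow_add (mul_mem_pow_add (mul_mem_pow_add hg' hw) (inv_mem_pow hsym hg'))
      (inv_mem_pow hsym hw)

end FixerInPower

section Extension

variable {H : Type*} [NormedAddCommGroup H] [InnerProductSpace ℝ H]

theorem orthonormal_sumElim {K L : Type*} {e : K → H} {f : L → H} (he : Orthonormal ℝ e)
    (hf : Orthonormal ℝ f) (hef : ∀ k l, inner ℝ (e k) (f l) = 0) :
    Orthonormal ℝ (Sum.elim e f) := by
  refine ⟨?_, ?_⟩
  · rintro (k | l)
    exacts [he.1 k, hf.1 l]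
  · rintro (k | l) (k' | l') h
    · exact he.2 fun h' => h (h' ▸ rfl)
    · exact hef k l'
    · exact (real_inner_comm _ _).trans (hef k' l)
    · exact hf.2 fun h' => h (h' ▸ rfl)

theorem countable_of_orthonormal [TopologicalSpace.SeparableSpace H] {K : Type*} {e : K → H}
    (he : Orthonormal ℝ e) : Countable K := by
  refine Pairwise.countable_of_isOpen_disjoint (s := fun k => Metric.ball (e k) (1 / 2)) ?_
    (fun k => Metric.isOpen_ball) (fun k => ⟨e k, Metric.mem_ball_self (by norm_num)⟩)
  intro k l hkl
  refine Metric.ball_disjoint_ball ?_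
  have h := norm_sub_sq_real (e k) (e l)
  rw [he.1 k, he.1 l, he.2 hkl] at h
  rw [dist_eq_norm]
  nlinarith [norm_nonneg (e k - e l)]

variable [CompleteSpace H] [TopologicalSpace.SeparableSpace H]

theorem exists_hilbertBasis_sum {K : Type*} {e : K → H} {y : ℕ → H} (he : Orthonormal ℝ e)
    (hy : Orthonormal ℝ y) (hey : ∀ k n, inner ℝ (e k) (y n) = 0) :
    ∃ B : HilbertBasis (K ⊕ ℕ) ℝ H, ∀ k, B (Sum.inl k) = e k := by
  set U := (Submodule.span ℝ (Set.range e))ᗮ with hU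
  have hmem : ∀ x, x ∈ U ↔ ∀ k, inner ℝ (e k) x = 0 := by
    intro x
    rw [hU, Submodule.mem_orthogonal]
    refine ⟨fun h k => h _ (Submodule.subset_span ⟨k, rfl⟩), fun h v hv => ?_⟩
    induction hv using Submodule.span_induction with
    | mem v hv => obtain ⟨k, rfl⟩ := hv; exact h k
    | zero => simp
    | add v w _ _ hv hw => rw [inner_add_left, hv, hw, add_zero]
    | smul a v _ hv => rw [inner_smul_left, hv, mul_zero]
  obtain ⟨w, b, -⟩ := exists_hilbertBasis ℝ U
  have hcount : Countable w := countable_of_orthonormal b.orthonormal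
  have hinf : Infinite w := by
    by_contra hfin
    have : Fintype w := @Fintype.ofFinite _ (not_infinite_iff_finite.1 hfin)
    have : Module.Finite ℝ U := Module.Finite.of_basis b.toOrthonormalBasis.toBasis
    let y' : ℕ → U := fun n => ⟨y n, (hmem _).2 fun k => hey k n⟩
    have hy' : LinearIndependent ℝ y' :=
      LinearIndependent.of_comp U.subtype (hy.linearIndependent : LinearIndependent ℝ y)
    exact not_finite_iff_infinite.2 (inferInstance : Infinite ℕ) hy'.finite
  obtain ⟨φ⟩ := nonempty_equiv_of_countable (α := ℕ) (β := w)
  have hf : Orthonormal ℝ fun n => (b (φ n) : H) :=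
    (b.orthonormal.comp φ φ.injective).comp_linearIsometry U.subtypeₗᵢ
  have hef := orthonormal_sumElim he hf fun k n => (hmem _).1 (b (φ n)).2 k
  refine ⟨HilbertBasis.mkOfOrthogonalEqBot hef ?_, fun k => by
    rw [HilbertBasis.coe_mkOfOrthogonalEqBot]; rfl⟩
  rw [Submodule.eq_bot_iff]
  intro x hx
  have hx' : ∀ i, inner ℝ (Sum.elim e (fun n => (b (φ n) : H)) i) x = 0 := fun i =>
    (Submodule.mem_orthogonal _ _).1 hx _ (Submodule.subset_span ⟨i, rfl⟩)
  have hxU : x ∈ U := (hmem x).2 fun k => hx' (Sum.inl k)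
  have h0 : b.repr ⟨x, hxU⟩ = 0 := by
    ext i
    obtain ⟨n, rfl⟩ := φ.surjective i
    rw [b.repr_apply_apply]
    exact hx' (Sum.inr n)
  simpa using h0

theorem exists_isometryEquiv_apply_eq {K : Type*} {e e' : K → H} {y y' : ℕ → H}
    (he : Orthonormal ℝ e) (hy : Orthonormal ℝ y) (hey : ∀ k n, inner ℝ (e k) (y n) = 0)
    (he' : Orthonormal ℝ e') (hy' : Orthonormal ℝ y') (hey' : ∀ k n, inner ℝ (e' k) (y' n) = 0) :
    ∃ u : H ≃ₗᵢ[ℝ] H, ∀ k, u (e k) = e' k := by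
  obtain ⟨B, hB⟩ := exists_hilbertBasis_sum he hy hey
  obtain ⟨B', hB'⟩ := exists_hilbertBasis_sum he' hy' hey'
  obtain ⟨u, hu⟩ := B.exists_isometryEquiv B'
  exact ⟨u, fun k => by rw [← hB, hu, hB']⟩

theorem exists_mem_vectorFixer_apply_eq {I K : Type*} {b : I → H} (hb : Orthonormal ℝ b)
    (S : Set I) {e e' : K → H} {y y' : ℕ → H}
    (he : Orthonormal ℝ e) (hy : Orthonormal ℝ y) (hey : ∀ k n, inner ℝ (e k) (y n) = 0)
    (hbe : ∀ i ∈ S, ∀ k, inner ℝ (b i) (e k) = 0) (hby : ∀ i ∈ S, ∀ n, inner ℝ (b i) (y n) = 0)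
    (he' : Orthonormal ℝ e') (hy' : Orthonormal ℝ y') (hey' : ∀ k n, inner ℝ (e' k) (y' n) = 0)
    (hbe' : ∀ i ∈ S, ∀ k, inner ℝ (b i) (e' k) = 0)
    (hby' : ∀ i ∈ S, ∀ n, inner ℝ (b i) (y' n) = 0) :
    ∃ u ∈ vectorFixer b S, ∀ k, u (e k) = e' k := by
  have hbS : Orthonormal ℝ fun i : S => b i := hb.comp _ Subtype.val_injective
  obtain ⟨u, hu⟩ := exists_isometryEquiv_apply_eq
    (orthonormal_sumElim hbS he fun i k => hbe i i.2 k) hy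
    (by rintro (i | k) n; exacts [hby i i.2 n, hey k n])
    (orthonormal_sumElim hbS he' fun i k => hbe' i i.2 k) hy'
    (by rintro (i | k) n; exacts [hby' i i.2 n, hey' k n])
  exact ⟨u, fun i hi => hu (Sum.inl ⟨i, hi⟩), fun k => hu (Sum.inr k)⟩

end Extension

section Factorization

variable {H : Type*} [NormedAddCommGroup H] [InnerProductSpace ℝ H] {I : Type*}

theorem exists_unit_vector_orthogonal {b : I → H} (hb : Orthonormal ℝ b) {J : Set I}
    (hJ : J.Infinite) {t : Set H} (ht : t.Finite) :
    ∃ v : H, ‖v‖ = 1 ∧ (∀ i ∉ J, inner ℝ (b i) v = 0) ∧ ∀ x ∈ t, inner ℝ x v = 0 := by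
  have := hJ.to_subtype
  have := ht.to_subtype
  have hli : LinearIndependent ℝ fun j : J => b j :=
    (hb.comp _ Subtype.val_injective).linearIndependent
  let V := Submodule.span ℝ (Set.range fun j : J => b j)
  let L : V →ₗ[ℝ] (t → ℝ) := LinearMap.pi fun x => (innerₛₗ ℝ (x : H)).comp V.subtype
  have hker : LinearMap.ker L ≠ ⊥ := by
    intro hbot
    have : Module.Finite ℝ V := Module.Finite.of_injective L (LinearMap.ker_eq_bot.1 hbot)
    have h2 := LinearIndependent.finite (linearIndependent_span hli)
    exact not_finite_iff_infinite.2 ‹_› h2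
  obtain ⟨v, hv, hv0⟩ := Submodule.exists_mem_ne_zero_of_ne_bot hker
  have hnorm : ‖(v : H)‖ ≠ 0 := by simpa using hv0
  refine ⟨‖(v : H)‖⁻¹ • (v : H), ?_, ?_, ?_⟩
  · rw [norm_smul, norm_inv, norm_norm, inv_mul_cancel₀ hnorm]
  · intro i hi
    rw [inner_smul_right]
    have : ∀ w ∈ V, inner ℝ (b i) w = 0 := by
      intro w hw
      induction hw using Submodule.span_induction with
      | mem w hw => obtain ⟨j, rfl⟩ := hw; exact hb.2 fun h => hi (h ▸ j.2)
      | zero => simp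
      | add v w _ _ hv hw => rw [inner_add_right, hv, hw, add_zero]
      | smul a v _ hv => rw [inner_smul_right, hv, mul_zero]
    rw [this v v.2, mul_zero]
  · intro x hx
    have : L v ⟨x, hx⟩ = 0 := by rw [LinearMap.mem_ker.1 hv]; rfl
    rw [inner_smul_right]
    exact mul_eq_zero_of_right _ this

theorem exists_orthonormal_pair {b : I → H} (hb : Orthonormal ℝ b) {J L : Set I}
    (hJ : J.Infinite) (hL : L.Infinite) (g : H ≃ₗᵢ[ℝ] H) :
    ∃ z y : ℕ → H, Orthonormal ℝ z ∧ Orthonormal ℝ y ∧ (∀ i ∉ J, ∀ n, inner ℝ (b i) (z n) = 0) ∧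
      (∀ i ∉ L, ∀ n, inner ℝ (b i) (y n) = 0) ∧ ∀ m n, inner ℝ (g (z m)) (y n) = 0 := by
  obtain ⟨f, hf, hr⟩ := exists_seq_of_forall_finset_exists
    (fun q : H × H => ‖q.1‖ = 1 ∧ ‖q.2‖ = 1 ∧ (∀ i ∉ J, inner ℝ (b i) q.1 = 0) ∧
      (∀ i ∉ L, inner ℝ (b i) q.2 = 0) ∧ inner ℝ (g q.1) q.2 = 0)
    (fun q r => inner ℝ q.1 r.1 = 0 ∧ inner ℝ q.2 r.2 = 0 ∧ inner ℝ (g q.1) r.2 = 0 ∧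
      inner ℝ (g r.1) q.2 = 0) (by
    intro s hs
    obtain ⟨z, hz1, hzJ, hzt⟩ := exists_unit_vector_orthogonal hb hJ
      (t := (Prod.fst '' (s : Set (H × H))) ∪ (fun q : H × H => g⁻¹ q.2) '' (s : Set (H × H)))
      ((s.finite_toSet.image _).union (s.finite_toSet.image _))
    obtain ⟨y, hy1, hyL, hyt⟩ := exists_unit_vector_orthogonal hb hL
      (t := insert (g z) ((Prod.snd '' (s : Set (H × H))) ∪
        (fun q : H × H => g q.1) '' (s : Set (H × H))))
      (((s.finite_toSet.image _).union (s.finite_toSet.image _)).insert _)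
    refine ⟨(z, y), ⟨hz1, hy1, hzJ, hyL, hyt _ (Set.mem_insert _ _)⟩, fun q hq =>
      ⟨hzt _ (Or.inl ⟨q, hq, rfl⟩), hyt _ (Or.inr (Or.inl ⟨q, hq, rfl⟩)),
        hyt _ (Or.inr (Or.inr ⟨q, hq, rfl⟩)), ?_⟩⟩
    have := hzt _ (Or.inr ⟨q, hq, rfl⟩)
    rw [← LinearIsometryEquiv.inner_map_map g, real_inner_comm] at this
    rw [← this]
    congr 1
    exact (g.apply_symm_apply q.2).symm)
  refine ⟨fun n => (f n).1, fun n => (f n).2, ⟨fun n => (hf n).1, ?_⟩, ⟨fun n => (hf n).2.1, ?_⟩,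
    fun i hi n => (hf n).2.2.1 i hi, fun i hi n => (hf n).2.2.2.1 i hi, ?_⟩
  · intro m n hmn
    rcases lt_or_gt_of_ne hmn with h | h
    · exact (hr m n h).1
    · exact (real_inner_comm _ _).trans (hr n m h).1
  · intro m n hmn
    rcases lt_or_gt_of_ne hmn with h | h
    · exact (hr m n h).2.1
    · exact (real_inner_comm _ _).trans (hr n m h).2.1
  · intro m n
    rcases lt_trichotomy m n with h | rfl | h
    · exact (hr m n h).2.2.1
    · exact (hf m).2.2.2.2
    · exact (hr n m h).2.2.2

theorem exists_nat_injection {J : Set I} (hJ : J.Infinite) [Countable I] :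
    ∃ φ : ℕ → I, Function.Injective φ ∧ Set.range φ = J := by
  have := hJ.to_subtype
  obtain ⟨φ⟩ := nonempty_equiv_of_countable (α := ℕ) (β := J)
  refine ⟨fun n => φ n, Subtype.val_injective.comp φ.injective, ?_⟩
  ext i
  refine ⟨fun ⟨n, hn⟩ => hn ▸ (φ n).2, fun hi => ⟨φ.symm ⟨i, hi⟩, by simp⟩⟩

variable [CompleteSpace H] [TopologicalSpace.SeparableSpace H]

theorem exists_factorization [Countable I] {b : I → H} (hb : Orthonormal ℝ b) {S T : Set I}
    (hST : (S \ T).Infinite) (hTS : (T \ S).Infinite) (hc : (S ∪ T)ᶜ.Infinite)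
    {g : H ≃ₗᵢ[ℝ] H} (hg : g ∈ vectorFixer b (S ∩ T)) :
    ∃ k ∈ vectorFixer b S, ∃ c ∈ vectorFixer b T, ∃ m ∈ vectorFixer b S, ∃ d ∈ vectorFixer b T,
      g = k * c * m * d := by
  obtain ⟨z, y, hz, hy, hzJ, hyL, hzy⟩ := exists_orthonormal_pair hb hST
    (L := Sᶜ) (hTS.mono fun i hi => hi.2) g
  obtain ⟨x, hxi, hxr⟩ := exists_nat_injection hTS
  obtain ⟨ζ, hζi, hζr⟩ := exists_nat_injection hST
  obtain ⟨η, hηi, hηr⟩ := exists_nat_injection hc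
  have hx : ∀ n, x n ∈ T ∧ x n ∉ S := fun n => by
    have : x n ∈ T \ S := hxr ▸ ⟨n, rfl⟩
    exact this
  have hζ : ∀ n, ζ n ∈ S ∧ ζ n ∉ T := fun n => by
    have : ζ n ∈ S \ T := hζr ▸ ⟨n, rfl⟩
    exact this
  have hη : ∀ n, η n ∉ S ∧ η n ∉ T := fun n => by
    have : η n ∈ (S ∪ T)ᶜ := hηr ▸ ⟨n, rfl⟩
    simpa using this
  have hyS : ∀ i ∈ S, ∀ n, inner ℝ (b i) (y n) = 0 := fun i hi n => hyL i (not_not.2 hi) n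
  obtain ⟨k, hk, hky⟩ := exists_mem_vectorFixer_apply_eq hb S
    (e := fun n => y (2 * n)) (y := fun n => y (2 * n + 1)) (e' := fun n => b (x n))
    (y' := fun n => b (η n))
    (hy.comp _ fun m n h => by simpa using h) (hy.comp _ fun m n h => by simpa using h)
    (fun m n => hy.2 (by lia)) (fun i hi n => hyS i hi _) (fun i hi n => hyS i hi _)
    (hb.comp _ hxi) (hb.comp _ hηi) (fun m n => hb.2 fun h => (hη n).2 (h ▸ (hx m).1))
    (fun i hi n => hb.2 fun h => (hx n).2 (h ▸ hi)) (fun i hi n => hb.2 fun h => (hη n).1 (h ▸ hi))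
  have hT : ∀ i ∈ T, i ∈ S ∩ T ∨ ∃ n, x n = i := by
    intro i hi
    by_cases hiS : i ∈ S
    · exact Or.inl ⟨hiS, hi⟩
    · have h : i ∈ Set.range x := hxr.symm ▸ ⟨hi, hiS⟩
      exact Or.inr h
  have hζT : ∀ i ∈ T, ∀ n, inner ℝ (b i) (b (ζ n)) = 0 :=
    fun i hi n => hb.2 fun h => (hζ n).2 (h ▸ hi)
  have hηT : ∀ i ∈ T, ∀ n, inner ℝ (b i) (b (η n)) = 0 :=
    fun i hi n => hb.2 fun h => (hη n).2 (h ▸ hi)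
  have hζη : ∀ m n, inner ℝ (b (ζ m)) (b (η n)) = 0 :=
    fun m n => hb.2 fun h => (hη n).1 (h ▸ (hζ m).1)
  obtain ⟨c, hcT, hcz⟩ := exists_mem_vectorFixer_apply_eq hb T
    (e := fun n => (k * g) (z n)) (y := fun n => k (y (2 * n + 1)))
    (e' := fun n => b (ζ n)) (y' := fun n => b (η n))
    (hz.comp_linearIsometry (k * g).toLinearIsometry)
    ((hy.comp _ fun m n h => by simpa using h).comp_linearIsometry k.toLinearIsometry)
    (fun m n => by rw [mul_apply_isometry, LinearIsometryEquiv.inner_map_map]; exact hzy _ _)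
    (fun i hi n => by
      rw [mul_apply_isometry]
      rcases hT i hi with h | ⟨l, rfl⟩
      · rw [← hk i h.1, LinearIsometryEquiv.inner_map_map, ← hg i h,
          LinearIsometryEquiv.inner_map_map]
        exact hzJ i (fun h' => h'.2 hi) n
      · rw [← hky, LinearIsometryEquiv.inner_map_map, real_inner_comm]
        exact hzy _ _)
    (fun i hi n => by
      rcases hT i hi with h | ⟨l, rfl⟩
      · rw [← hk i h.1, LinearIsometryEquiv.inner_map_map]
        exact hyS i h.1 _
      · rw [← hky, LinearIsometryEquiv.inner_map_map]
        exact hy.2 (by lia))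
    (hb.comp _ hζi) (hb.comp _ hηi) hζη hζT hηT
  obtain ⟨d, hdT, hdz⟩ := exists_mem_vectorFixer_apply_eq hb T
    (e := z) (y := fun n => b (η n)) (e' := fun n => b (ζ n)) (y' := fun n => b (η n))
    hz (hb.comp _ hηi)
    (fun m n => (real_inner_comm _ _).trans (hzJ _ (fun h => (hη n).1 h.1) m))
    (fun i hi n => hzJ i (fun h => h.2 hi) n) hηT
    (hb.comp _ hζi) (hb.comp _ hηi) hζη hζT hηT
  refine ⟨k⁻¹, inv_mem hk, c⁻¹, inv_mem hcT, c * k * g * d⁻¹, fun i hi => ?_, d, hdT, by group⟩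
  by_cases hiT : i ∈ T
  · rw [mul_apply_isometry, inv_mem hdT i hiT, mul_apply_isometry, hg i ⟨hi, hiT⟩,
      mul_apply_isometry, hk i hi, hcT i hiT]
  · obtain ⟨n, rfl⟩ : i ∈ Set.range ζ := hζr.symm ▸ ⟨hi, hiT⟩
    have h1 : d⁻¹ (b (ζ n)) = z n := by rw [inv_apply_eq_iff, hdz]
    rw [mul_apply_isometry, h1, mul_assoc, mul_apply_isometry, hcz]

end Factorization

section FiniteCodimension

theorem exists_almost_disjoint_family : ∃ A : (ℕ → Bool) → Set ℕ, (∀ x, (A x).Infinite) ∧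
    ∀ x y, x ≠ y → (A x ∩ A y).Finite := by
  have hinj : ∀ x : ℕ → Bool, Function.Injective
      fun n => Encodable.encode ((List.range n).map x) := by
    intro x m n h
    simpa using congrArg List.length (Encodable.encode_injective h)
  refine ⟨fun x => Set.range fun n => Encodable.encode ((List.range n).map x),
    fun x => Set.infinite_range_of_injective (hinj x), fun x y hxy => ?_⟩
  obtain ⟨i, hi⟩ := Function.ne_iff.1 hxy
  refine ((Set.finite_Iic i).image fun n => Encodable.encode ((List.range n).map x)).subset ?_
  rintro _ ⟨⟨m, rfl⟩, ⟨n, hn⟩⟩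
  refine ⟨m, ?_, rfl⟩
  have h := Encodable.encode_injective hn
  have hmn : n = m := by simpa using congrArg List.length h
  subst hmn
  by_contra hlt
  have hlt : i < n := not_le.1 hlt
  exact hi (List.map_inj_left.1 h i (List.mem_range.2 hlt)).symm

theorem exists_perm_mem_iff {I : Type*} [Countable I] {S T : Set I} (hS : S.Infinite)
    (hSc : Sᶜ.Infinite) (hT : T.Infinite) (hTc : Tᶜ.Infinite) :
    ∃ σ : Equiv.Perm I, ∀ i, σ i ∈ T ↔ i ∈ S := by
  classical
  have := hS.to_subtype
  have := hT.to_subtype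
  have : Infinite {i // ¬ i ∈ S} := hSc.to_subtype
  have : Infinite {i // ¬ i ∈ T} := hTc.to_subtype
  obtain ⟨e⟩ := nonempty_equiv_of_countable (α := {i // i ∈ S}) (β := {i // i ∈ T})
  obtain ⟨f⟩ := nonempty_equiv_of_countable (α := {i // ¬ i ∈ S}) (β := {i // ¬ i ∈ T})
  refine ⟨Equiv.subtypeCongr e f, fun i => ?_⟩
  by_cases hi : i ∈ S
  · simp [Equiv.subtypeCongr, hi]
  · simpa [Equiv.subtypeCongr, hi] using (f ⟨i, hi⟩).2

variable {H : Type*} [NormedAddCommGroup H] [InnerProductSpace ℝ H] [CompleteSpace H]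
  [TopologicalSpace.SeparableSpace H] {I : Type*} {W : Set (H ≃ₗᵢ[ℝ] H)}

theorem exists_finite_vectorFixer_subset [Countable I] (b : HilbertBasis I ℝ H)
    (hsym : W⁻¹ = W) {s : ℕ → (H ≃ₗᵢ[ℝ] H)} (hs : ∀ g, ∃ n, g ∈ s n • W)
    {S : Set I} (hS : S.Infinite) (hSc : Sᶜ.Infinite) {N : ℕ}
    (hSW : (vectorFixer b S : Set (H ≃ₗᵢ[ℝ] H)) ⊆ W ^ N) :
    ∃ F : Set I, F.Finite ∧ (vectorFixer b F : Set (H ≃ₗᵢ[ℝ] H)) ⊆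
      W ^ (N + (2 + N + 2) + N + (2 + N + 2)) := by
  have : Infinite I := Set.infinite_univ_iff.1 (hS.mono (Set.subset_univ _))
  obtain ⟨φ⟩ := nonempty_equiv_of_countable (α := I) (β := ℕ)
  obtain ⟨A, hA, hAA⟩ := exists_almost_disjoint_family
  let B : (ℕ → Bool) → Set I := fun x => φ ⁻¹' A x
  have hB : ∀ x, (B x).Infinite := fun x =>
    (hA x).preimage (by simp [φ.surjective.range_eq])
  have hBB : ∀ x y, x ≠ y → (B x ∩ B y).Finite := fun x y hxy =>
    Set.Finite.preimage (f := φ) φ.injective.injOn (hAA x y hxy)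
  have hBu : ∀ x y, (B x ∪ B y)ᶜ.Infinite := by
    intro x y
    obtain ⟨z, hz⟩ : ∃ z, z ∉ ({x, y} : Set (ℕ → Bool)) := by
      have := uncountable_nat_to_bool
      exact ((Set.toFinite {x, y}).infinite_compl).nonempty
    have h1 : x ≠ z := fun h => hz (by simp [h])
    have h2 : y ≠ z := fun h => hz (by simp [h])
    refine ((hB z).sdiff ((hBB x z h1).union (hBB y z h2))).mono ?_
    rintro i ⟨hi, hi'⟩ (h | h)
    · exact hi' (Or.inl ⟨h, hi⟩)
    · exact hi' (Or.inr ⟨h, hi⟩)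
  choose σ hσ using fun x => exists_perm_mem_iff hS hSc (hB x)
    (by simpa using hBu x x)
  choose h hh using fun x => b.exists_permutation (σ x)
  have := uncountable_nat_to_bool
  obtain ⟨x, y, hxy, hw⟩ := exists_ne_inv_mul_mem_sq hsym hs h
  set w := (h x)⁻¹ * h y with hwdef
  have hwb : ∀ i, w (b i) = b ((σ x).symm (σ y i)) := by
    intro i
    rw [hwdef, inv_mul_apply_eq_iff, hh, hh, Equiv.apply_symm_apply]
  have hSx : σ x ⁻¹' B x = S := Set.ext (hσ x)
  let T : Set I := σ x ⁻¹' B y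
  have hpre : ∀ {J : Set I}, J.Infinite → (σ x ⁻¹' J).Infinite := fun hJ =>
    hJ.preimage (by simp [(σ x).surjective.range_eq])
  have hfin : (S ∩ T).Finite := by
    rw [← hSx]
    exact Set.Finite.preimage (f := σ x) (σ x).injective.injOn (hBB x y hxy)
  have hT : T.Infinite := hpre (hB y)
  have hTW : ∀ u ∈ vectorFixer b T, u ∈ W ^ (2 + N + 2) := by
    intro u hu
    have h1 : w⁻¹ * (u * w) ∈ vectorFixer b S := by
      intro i hi
      rw [inv_mul_apply_eq_iff, mul_apply_isometry, hwb]
      refine hu _ ?_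
      simpa [T] using (hσ y i).2 hi
    have h2 : u = w * (w⁻¹ * (u * w)) * w⁻¹ := by group
    rw [h2]
    exact mul_mem_pow_add (mul_mem_pow_add hw (hSW h1)) (inv_mem_pow hsym hw)
  refine ⟨S ∩ T, hfin, fun g hg => ?_⟩
  obtain ⟨k, hk, c, hc, m, hm, d, hd, rfl⟩ := exists_factorization b.orthonormal (S := S) (T := T)
    (by rw [← Set.sdiff_inter_self_eq_sdiff, Set.inter_comm]; exact hS.sdiff hfin)
    (by rw [← Set.sdiff_inter_self_eq_sdiff]; exact hT.sdiff hfin)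
    (by
      rw [← hSx]
      exact hpre (hBu x y)) hg
  exact mul_mem_pow_add (mul_mem_pow_add (mul_mem_pow_add (hSW hk) (hTW c hc)) (hSW hm)) (hTW d hd)

end FiniteCodimension

section FiniteFrames

variable {H : Type*} [NormedAddCommGroup H] [InnerProductSpace ℝ H]

theorem exists_isometryEquiv_of_inner_eq {K : Type*} [Finite K] {x y : K → H}
    (hxy : ∀ i j, inner ℝ (x i) (x j) = inner ℝ (y i) (y j)) :
    ∃ u : H ≃ₗᵢ[ℝ] H, ∀ i, u (x i) = y i := by
  classical
  have := Fintype.ofFinite K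
  suffices h : ∀ s : Finset K, ∃ u : H ≃ₗᵢ[ℝ] H, ∀ i ∈ s, u (x i) = y i by
    obtain ⟨u, hu⟩ := h Finset.univ
    exact ⟨u, fun i => hu i (Finset.mem_univ i)⟩
  intro s
  induction s using Finset.induction_on with
  | empty => exact ⟨1, by simp⟩
  | insert k s hk ih =>
    obtain ⟨u, hu⟩ := ih
    have hnorm : ‖u (x k)‖ = ‖y k‖ := by
      rw [u.norm_map, ← sq_eq_sq₀ (norm_nonneg _) (norm_nonneg _), ← real_inner_self_eq_norm_sq,
        ← real_inner_self_eq_norm_sq, hxy]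
    refine ⟨((ℝ ∙ (u (x k) - y k))ᗮ).reflection * u, fun i hi => ?_⟩
    rw [mul_apply_isometry]
    rcases Finset.mem_insert.1 hi with rfl | hi
    · exact Submodule.reflection_sub hnorm
    · rw [hu i hi]
      refine Submodule.reflection_mem_subspace_eq_self ?_
      rw [Submodule.mem_orthogonal_singleton_iff_inner_left, inner_sub_right, ← hxy, ← hu i hi,
        LinearIsometryEquiv.inner_map_map, sub_self]

theorem exists_isometryEquiv_of_inner_eq_pair {K : Type*} [Finite K] {x x' y y' : K → H}
    (h : ∀ i j, inner ℝ (x i) (x j) = inner ℝ (y i) (y j))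
    (h' : ∀ i j, inner ℝ (x' i) (x' j) = inner ℝ (y' i) (y' j))
    (hx : ∀ i j, inner ℝ (x i) (x' j) = inner ℝ (y i) (y' j)) :
    ∃ u : H ≃ₗᵢ[ℝ] H, (∀ i, u (x i) = y i) ∧ ∀ i, u (x' i) = y' i := by
  obtain ⟨u, hu⟩ := exists_isometryEquiv_of_inner_eq (x := Sum.elim x x') (y := Sum.elim y y') (by
    rintro (i | i) (j | j)
    · exact h i j
    · exact hx i j
    · simpa only [Sum.elim_inl, Sum.elim_inr, real_inner_comm] using hx j i
    · exact h' i j)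
  exact ⟨u, fun i => hu (Sum.inl i), fun i => hu (Sum.inr i)⟩

theorem posSemidef_one_sub_mul_transpose {K : Type*} [Fintype K] [DecidableEq K]
    {M : Matrix K K ℝ} (hM : ∑ i, ∑ j, M i j ^ 2 ≤ 1) : (1 - M * M.transpose).PosSemidef := by
  refine .of_dotProduct_mulVec_nonneg ?_ fun x => ?_
  · simp [Matrix.IsHermitian, Matrix.conjTranspose_eq_transpose_of_trivial]
  · have h1 : star x ⬝ᵥ ((1 - M * M.transpose).mulVec x) =
        ∑ i, x i ^ 2 - ∑ j, (∑ i, M i j * x i) ^ 2 := by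
      rw [Matrix.sub_mulVec, dotProduct_sub, Matrix.one_mulVec, ← Matrix.mulVec_mulVec,
        Matrix.dotProduct_mulVec, ← Matrix.mulVec_transpose]
      simp [dotProduct, Matrix.mulVec, sq]
    have h2 : ∑ j, (∑ i, M i j * x i) ^ 2 ≤ ∑ j, (∑ i, M i j ^ 2) * ∑ i, x i ^ 2 :=
      Finset.sum_le_sum fun j _ => Finset.sum_mul_sq_le_sq_mul_sq _ _ _
    rw [← Finset.sum_mul, Finset.sum_comm] at h2
    have h3 : 0 ≤ ∑ i, x i ^ 2 := Finset.sum_nonneg fun i _ => sq_nonneg _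
    rw [h1]
    nlinarith

open scoped MatrixOrder in
theorem exists_eq_transpose_mul_self_of_posSemidef {K : Type*} [Fintype K] [DecidableEq K]
    {A : Matrix K K ℝ} (hA : A.PosSemidef) : ∃ B : Matrix K K ℝ, A = B.transpose * B := by
  obtain ⟨B, hB⟩ := CStarAlgebra.nonneg_iff_eq_star_mul_self.1 hA.nonneg
  exact ⟨B, by rw [hB, Matrix.star_eq_conjTranspose,
    Matrix.conjTranspose_eq_transpose_of_trivial]⟩

theorem exists_orthonormal_with_inner {K : Type*} [Fintype K] [DecidableEq K] {f p r e : K → H}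
    (hp : Orthonormal ℝ p) (hr : Orthonormal ℝ r) (he : Orthonormal ℝ e)
    (hpr : ∀ i j, inner ℝ (p i) (r j) = 0) (hpe : ∀ i j, inner ℝ (p i) (e j) = 0)
    (hre : ∀ i j, inner ℝ (r i) (e j) = 0) {c σ : ℝ} (hc : c ^ 2 + σ ^ 2 = 1)
    (hf : ∀ i, f i = c • p i + σ • r i) {M : Matrix K K ℝ} (hM : ∑ i, ∑ j, M i j ^ 2 ≤ 1) :
    ∃ x : K → H, Orthonormal ℝ x ∧ (∀ i j, inner ℝ (p i) (x j) = if i = j then c else 0) ∧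
      ∀ i j, inner ℝ (x i) (f j) = c ^ 2 * (if i = j then 1 else 0) + σ ^ 2 * M i j := by
  obtain ⟨B, hB⟩ := exists_eq_transpose_mul_self_of_posSemidef
    (posSemidef_one_sub_mul_transpose hM)
  have hB' : ∀ i j, ∑ m, M i m * M j m + ∑ m, B m i * B m j = if i = j then 1 else 0 := by
    intro i j
    have h := congrFun (congrFun hB i) j
    simp only [Matrix.sub_apply, Matrix.one_apply, Matrix.mul_apply, Matrix.transpose_apply] at h
    linarith
  let R : K → H := fun i => ∑ m, M i m • r m
  let Q : K → H := fun i => ∑ m, B m i • e m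
  have hpp : ∀ i j, inner ℝ (p i) (p j) = if i = j then 1 else 0 := orthonormal_iff_ite.1 hp
  have hrr : ∀ i j, inner ℝ (r i) (r j) = if i = j then 1 else 0 := orthonormal_iff_ite.1 hr
  have hRR : ∀ i j, inner ℝ (R i) (R j) = ∑ m, M i m * M j m := fun i j => by
    simpa using hr.inner_sum (fun m => M i m) (fun m => M j m) Finset.univ
  have hQQ : ∀ i j, inner ℝ (Q i) (Q j) = ∑ m, B m i * B m j := fun i j => by
    simpa using he.inner_sum (fun m => B m i) (fun m => B m j) Finset.univ
  have hpR : ∀ i j, inner ℝ (p i) (R j) = 0 := fun i j => by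
    simp [R, inner_sum, inner_smul_right, hpr]
  have hpQ : ∀ i j, inner ℝ (p i) (Q j) = 0 := fun i j => by
    simp [Q, inner_sum, inner_smul_right, hpe]
  have hrQ : ∀ i j, inner ℝ (r i) (Q j) = 0 := fun i j => by
    simp [Q, inner_sum, inner_smul_right, hre]
  have hRr : ∀ i j, inner ℝ (R i) (r j) = M i j := fun i j => by
    simp [R, sum_inner, inner_smul_left, hrr]
  have hRQ : ∀ i j, inner ℝ (R i) (Q j) = 0 := fun i j => by
    simp [R, sum_inner, inner_smul_left, hrQ]
  have hRp : ∀ i j, inner ℝ (R i) (p j) = 0 := fun i j => by rw [real_inner_comm, hpR]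
  have hQp : ∀ i j, inner ℝ (Q i) (p j) = 0 := fun i j => by rw [real_inner_comm, hpQ]
  have hQr : ∀ i j, inner ℝ (Q i) (r j) = 0 := fun i j => by rw [real_inner_comm, hrQ]
  have hQR : ∀ i j, inner ℝ (Q i) (R j) = 0 := fun i j => by rw [real_inner_comm, hRQ]
  refine ⟨fun i => c • p i + σ • R i + σ • Q i, ?_, fun i j => ?_, fun i j => ?_⟩
  · rw [orthonormal_iff_ite]
    intro i j
    simp only [inner_add_left, inner_add_right, real_inner_smul_left, real_inner_smul_right,
      hpp, hRR, hQQ, hpR, hpQ, hRQ, hRp, hQp, hQR]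
    have h := hB' i j
    split_ifs with hij
    · rw [if_pos hij] at h
      linear_combination σ ^ 2 * h + hc
    · rw [if_neg hij] at h
      linear_combination σ ^ 2 * h
  · simp only [inner_add_right, real_inner_smul_right, hpp, hpR, hpQ]
    split_ifs <;> ring
  · simp only [hf, inner_add_left, inner_add_right, real_inner_smul_left, real_inner_smul_right,
      hpp, hRr, hpr, hRp, hQp, hQr]
    ring

theorem exists_orthonormal_orthogonal_finite {b : ℕ → H} (hb : Orthonormal ℝ b) {t : Set H}
    (ht : t.Finite) : ∃ y : ℕ → H, Orthonormal ℝ y ∧ ∀ v ∈ t, ∀ n, inner ℝ v (y n) = 0 := by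
  obtain ⟨y, hy, hyy⟩ := exists_seq_of_forall_finset_exists
    (fun y : H => ‖y‖ = 1 ∧ ∀ v ∈ t, inner ℝ v y = 0) (fun y z => inner ℝ y z = 0) (by
      intro s _
      obtain ⟨y, hy1, -, hyt⟩ := exists_unit_vector_orthogonal hb Set.infinite_univ
        (ht.union s.finite_toSet)
      exact ⟨y, ⟨hy1, fun v hv => hyt v (Or.inl hv)⟩, fun v hv => hyt v (Or.inr hv)⟩)
  refine ⟨y, ⟨fun n => (hy n).1, fun m n hmn => ?_⟩, fun v hv n => (hy n).2 v hv⟩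
  rcases lt_or_gt_of_ne hmn with h | h
  · exact hyy m n h
  · exact (real_inner_comm _ _).trans (hyy n m h)

theorem exists_mem_sq_inner_eq {b : ℕ → H} (hb : Orthonormal ℝ b) {W : Set (H ≃ₗᵢ[ℝ] H)}
    (hsym : W⁻¹ = W) {s : ℕ → (H ≃ₗᵢ[ℝ] H)} (hs : ∀ g, ∃ n, g ∈ s n • W) {K : Type*} [Finite K]
    [DecidableEq K] {f : K → H} (hf : Orthonormal ℝ f) :
    ∃ w ∈ W ^ 2, ∃ c σ : ℝ, c ^ 2 + σ ^ 2 = 1 ∧ σ ≠ 0 ∧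
      ∀ i j, inner ℝ (w (f i)) (f j) = if i = j then c else 0 := by
  obtain ⟨ι, hι⟩ := Countable.exists_injective_nat K
  obtain ⟨y, hy, hfy⟩ := exists_orthonormal_orthogonal_finite hb (Set.finite_range f)
  have hff : ∀ i j, inner ℝ (f i) (f j) = if i = j then 1 else 0 := orthonormal_iff_ite.1 hf
  have hyy : ∀ i j, inner ℝ (y (ι i)) (y (ι j)) = if i = j then (1 : ℝ) else 0 :=
    orthonormal_iff_ite.1 (hy.comp ι hι)
  have hfy' : ∀ i n, inner ℝ (f i) (y n) = 0 := fun i => hfy _ ⟨i, rfl⟩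
  have hyf : ∀ i n, inner ℝ (y n) (f i) = 0 := fun i n => by rw [real_inner_comm, hfy']
  have hrot : ∀ t : ℝ, ∃ u : H ≃ₗᵢ[ℝ] H, ∀ i,
      u (f i) = Real.cos (Real.arctan t) • f i + Real.sin (Real.arctan t) • y (ι i) := by
    intro t
    refine exists_isometryEquiv_of_inner_eq fun i j => ?_
    simp only [inner_add_left, inner_add_right, real_inner_smul_left, real_inner_smul_right, hff,
      hyy, hfy', hyf]
    split_ifs
    · linear_combination -Real.cos_sq_add_sin_sq (Real.arctan t)
    · ring
  choose h hh using hrot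
  obtain ⟨t, t', htt, hw⟩ := exists_ne_inv_mul_mem_sq hsym hs h
  refine ⟨(h t)⁻¹ * h t', hw, Real.cos (Real.arctan t - Real.arctan t'),
    Real.sin (Real.arctan t - Real.arctan t'), Real.cos_sq_add_sin_sq _, fun h0 => ?_,
    fun i j => ?_⟩
  · have h1 := Real.arctan_lt_pi_div_two t
    have h2 := Real.arctan_lt_pi_div_two t'
    have h3 := Real.neg_pi_div_two_lt_arctan t
    have h4 := Real.neg_pi_div_two_lt_arctan t'
    have h5 := (Real.sin_eq_zero_iff_of_lt_of_lt (by linarith) (by linarith)).1 h0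
    exact htt (Real.arctan_injective (sub_eq_zero.1 h5))
  · have h1 : h t (((h t)⁻¹ * h t') (f i)) = h t' (f i) := (h t).apply_symm_apply _
    rw [← LinearIsometryEquiv.inner_map_map (h t), h1, hh, hh, Real.cos_sub]
    simp only [inner_add_left, inner_add_right, real_inner_smul_left, real_inner_smul_right, hff,
      hyy, hfy', hyf]
    split_ifs <;> ring

theorem mem_pow_of_inner_eq {W : Set (H ≃ₗᵢ[ℝ] H)} (hsym : W⁻¹ = W) {K : Type*} [Finite K]
    {f x : K → H} {N : ℕ} (hN : ∀ u : H ≃ₗᵢ[ℝ] H, (∀ i, u (f i) = f i) → u ∈ W ^ N)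
    {w g : H ≃ₗᵢ[ℝ] H} (hw : w ∈ W ^ 2)
    (hxx : ∀ i j, inner ℝ (x i) (x j) = inner ℝ (f i) (f j))
    (hwx : ∀ i j, inner ℝ (w (f i)) (x j) = inner ℝ (w (f i)) (f j))
    (hxg : ∀ i j, inner ℝ (x i) (f j) = inner ℝ (g (f i)) (f j)) :
    g ∈ W ^ (N + (2 + N + 2) + N) := by
  obtain ⟨u, huw, huf⟩ := exists_isometryEquiv_of_inner_eq_pair (x := fun i => w (f i))
    (y := fun i => w (f i)) (x' := f) (y' := x) (fun _ _ => rfl) (fun i j => (hxx i j).symm)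
    fun i j => (hwx i j).symm
  obtain ⟨v, hvx, hvf⟩ := exists_isometryEquiv_of_inner_eq_pair (x := x) (y := fun i => g (f i))
    (x' := f) (y' := f) (fun i j => (hxx i j).trans (g.inner_map_map _ _).symm)
    (fun _ _ => rfl) hxg
  have hv1 : v ∈ W ^ N := hN v hvf
  have hu1 : u ∈ W ^ (2 + N + 2) := by
    have h1 : w⁻¹ * (u * w) ∈ W ^ N := hN _ fun i => by
      rw [inv_mul_apply_eq_iff, mul_apply_isometry]
      exact huw i
    have h2 : u = w * (w⁻¹ * (u * w)) * w⁻¹ := by group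
    rw [h2]
    exact mul_mem_pow_add (mul_mem_pow_add hw h1) (inv_mem_pow hsym hw)
  have hg1 : (v * u)⁻¹ * g ∈ W ^ N := hN _ fun i => by
    rw [inv_mul_apply_eq_iff, mul_apply_isometry, huf, hvx]
  have h3 : g = v * u * ((v * u)⁻¹ * g) := by group
  rw [h3]
  exact mul_mem_pow_add (mul_mem_pow_add hv1 hu1) hg1

theorem exists_open_subset_pow {b : ℕ → H} (hb : Orthonormal ℝ b) {W : Set (H ≃ₗᵢ[ℝ] H)}
    (hsym : W⁻¹ = W) {s : ℕ → (H ≃ₗᵢ[ℝ] H)} (hs : ∀ g, ∃ n, g ∈ s n • W) {K : Type*} [Finite K]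
    {f : K → H} (hf : Orthonormal ℝ f) {N : ℕ}
    (hN : ∀ u : H ≃ₗᵢ[ℝ] H, (∀ i, u (f i) = f i) → u ∈ W ^ N) :
    ∃ V : Set (H ≃ₗᵢ[ℝ] H), IsOpen[strongOperatorTopology ℝ H] V ∧ (1 : H ≃ₗᵢ[ℝ] H) ∈ V ∧
      V ⊆ W ^ ((N + (2 + N + 2) + N) + (N + (2 + N + 2) + N)) := by
  classical
  have := Fintype.ofFinite K
  obtain ⟨ι, hι⟩ := Countable.exists_injective_nat K
  have hff : ∀ i j, inner ℝ (f i) (f j) = if i = j then 1 else 0 := orthonormal_iff_ite.1 hf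
  obtain ⟨w, hw, c, σ, hcσ, hσ, hpf'⟩ := exists_mem_sq_inner_eq hb hsym hs hf
  obtain ⟨p, hpw⟩ : ∃ p : K → H, ∀ i, w (f i) = p i := ⟨_, fun _ => rfl⟩
  have hpf : ∀ i j, inner ℝ (p i) (f j) = if i = j then c else 0 := fun i j => by
    rw [← hpw, hpf']
  have hpp : ∀ i j, inner ℝ (p i) (p j) = if i = j then 1 else 0 := fun i j => by
    rw [← hpw, ← hpw, w.inner_map_map, hff]
  have hp : Orthonormal ℝ p := orthonormal_iff_ite.2 hpp
  have hfp : ∀ i j, inner ℝ (f i) (p j) = if i = j then c else 0 := fun i j => by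
    rw [real_inner_comm, hpf]
    simp only [eq_comm]
  let r : K → H := fun i => σ⁻¹ • (f i - c • p i)
  have hr : Orthonormal ℝ r := by
    rw [orthonormal_iff_ite]
    intro i j
    simp only [r, inner_sub_left, inner_sub_right, real_inner_smul_left, real_inner_smul_right,
      hff, hpp, hpf, hfp]
    split_ifs
    · field_simp
      linear_combination -hcσ
    · ring
  have hpr : ∀ i j, inner ℝ (p i) (r j) = 0 := by
    intro i j
    simp only [r, inner_sub_right, real_inner_smul_right, hpp, hpf]
    split_ifs <;> ring
  obtain ⟨e, he, hte⟩ := exists_orthonormal_orthogonal_finite hb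
    ((Set.finite_range p).union (Set.finite_range r))
  have hfr : ∀ i, f i = c • p i + σ • r i := by
    intro i
    simp only [r, smul_smul, mul_inv_cancel₀ hσ, one_smul]
    abel
  have hx := fun M : Matrix K K ℝ => exists_orthonormal_with_inner (f := f) (M := M) hp hr
    (he.comp ι hι) hpr (fun i j => hte _ (Or.inl ⟨i, rfl⟩) _) (fun i j => hte _ (Or.inr ⟨i, rfl⟩) _)
    hcσ hfr
  let δ : K → K → ℝ := fun i j => if i = j then 1 else 0
  have hD : ∀ g : H ≃ₗᵢ[ℝ] H,
      ∑ i, ∑ j, ((inner ℝ (g (f i)) (f j) - c ^ 2 * δ i j) / σ ^ 2) ^ 2 ≤ 1 →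
      g ∈ W ^ (N + (2 + N + 2) + N) := by
    intro g hg
    obtain ⟨x, hxo, hpx, hxf⟩ := hx
      (Matrix.of fun i j => (inner ℝ (g (f i)) (f j) - c ^ 2 * δ i j) / σ ^ 2)
      (by simpa only [Matrix.of_apply] using hg)
    have hxx : ∀ i j, inner ℝ (x i) (x j) = if i = j then 1 else 0 := orthonormal_iff_ite.1 hxo
    have hxg : ∀ i j, inner ℝ (x i) (f j) = inner ℝ (g (f i)) (f j) := by
      intro i j
      rw [hxf, Matrix.of_apply]
      simp only [δ]
      field_simp
      ring
    exact mem_pow_of_inner_eq hsym hN hw (fun i j => (hxx i j).trans (hff i j).symm)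
      (fun i j => by rw [hpw, hpx, hpf]) hxg
  obtain ⟨x, hxo, -, hxf⟩ := hx 0 (by simp)
  have hxf' : ∀ i j, inner ℝ (x i) (f j) - c ^ 2 * δ i j = 0 := fun i j => by
    rw [hxf]
    simp [δ]
  obtain ⟨k, hk⟩ := exists_isometryEquiv_of_inner_eq (x := f) (y := x) fun i j =>
    (hff i j).trans (orthonormal_iff_ite.1 hxo i j).symm
  refine ⟨{g | ∑ i, ∑ j, ((inner ℝ (g (x i)) (f j) - c ^ 2 * δ i j) / σ ^ 2) ^ 2 < 1}, ?_, ?_,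
    fun g hg => ?_⟩
  · refine isOpen_induced_iff.2 ⟨{φ : H → H |
      ∑ i, ∑ j, ((inner ℝ (φ (x i)) (f j) - c ^ 2 * δ i j) / σ ^ 2) ^ 2 < 1}, ?_, rfl⟩
    refine isOpen_lt ?_ continuous_const
    fun_prop
  · simp [hxf']
  · have h1 : g * k ∈ W ^ (N + (2 + N + 2) + N) := hD _ (by
      simp only [mul_apply_isometry, hk]
      exact le_of_lt hg)
    have h2 : k ∈ W ^ (N + (2 + N + 2) + N) := hD _ (by simp [hk, hxf'])
    have h3 : g = g * k * k⁻¹ := by group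
    rw [h3]
    exact mul_mem_pow_add h1 (inv_mem_pow hsym h2)

end FiniteFrames

/-- If `H` is an infinite-dimensional separable real Hilbert space and `W` is a symmetric,
countably syndetic subset of the orthogonal group `O(H)`, then `W ^ 506` contains an open
neighborhood of the identity in the strong operator topology. -/
theorem steinhaus_orthogonalGroup
    {H : Type*} [NormedAddCommGroup H] [InnerProductSpace ℝ H] [CompleteSpace H]
    [TopologicalSpace.SeparableSpace H] (hinf : ¬ FiniteDimensional ℝ H)
    (W : Set (H ≃ₗᵢ[ℝ] H)) (hsym : W⁻¹ = W)
    (hsynd : ∃ s : ℕ → (H ≃ₗᵢ[ℝ] H), ∀ g : (H ≃ₗᵢ[ℝ] H), ∃ n : ℕ, g ∈ s n • W) :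
    ∃ V : Set (H ≃ₗᵢ[ℝ] H),
      IsOpen[strongOperatorTopology ℝ H] V ∧ (1 : (H ≃ₗᵢ[ℝ] H)) ∈ V ∧ V ⊆ W ^ 506 := by
  obtain ⟨s, hs⟩ := hsynd
  obtain ⟨w, b₀, -⟩ := exists_hilbertBasis ℝ H
  have hcount : Countable w := countable_of_orthonormal b₀.orthonormal
  have hwinf : Infinite w := by
    by_contra hfin
    have : Fintype w := @Fintype.ofFinite _ (not_infinite_iff_finite.1 hfin)
    exact hinf (Module.Finite.of_basis b₀.toOrthonormalBasis.toBasis)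
  obtain ⟨φ⟩ := nonempty_equiv_of_countable (α := (ℕ × ℕ) × ℤ × ℕ) (β := w)
  obtain ⟨b, -⟩ := b₀.exists_reindex φ
  obtain ⟨S, hS, hSc, hSW⟩ := exists_vectorFixer_subset_pow_eight b hsym hs
  obtain ⟨F, hF, hFW⟩ := exists_finite_vectorFixer_subset b hsym hs hS hSc hSW
  have := hF.to_subtype
  obtain ⟨V, hV, hV1, hVW⟩ := exists_open_subset_pow
    (b := fun n : ℕ => b ((0, 0), 0, n)) (b.orthonormal.comp _ fun m n h => by simpa using h)
    hsym hs (b.orthonormal.comp _ Subtype.val_injective : Orthonormal ℝ fun i : F => b i)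
    fun u hu => hFW fun i hi => hu ⟨i, hi⟩
  refine ⟨V, hV, hV1, hVW.trans ?_⟩
  obtain ⟨n, hn⟩ := hs 1
  have h1 : (1 : H ≃ₗᵢ[ℝ] H) ∈ W ^ 2 := by simpa using inv_mul_mem_sq hsym hn hn
  have h2 := Set.pow_subset_pow_right h1 (show 124 ≤ 253 by norm_num)
  rwa [← pow_mul, ← pow_mul] at h2
end
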